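/- arXiv:1604.08830 — 2 statements merged into one kernel-verified Lean document; each statement's English description precedes it below -/
import Mathlib

section
/- Let n ≥ 2, −∞ < μ < 1/4 and 1 < p < p_KO, where p_KO := +∞ if 0 ≤ μ < 1/4 and p_KO := 1 − 2/α₋ if μ < 0. Then there exist a constant c > 0 and a positive classical solution u of Δu + (μ/x₁²)u = u^p on ℝⁿ₊ satisfying c⁻¹ x₁^{α₋} |x|^{−α₋−2/(p−1)} ≤ u(x) ≤ c x₁^{α₋} |x|^{−α₋−2/(p−1)} for all x ∈ ℝⁿ₊. -/
open Real Set

noncomputable def lap {n : ℕ} (u : EuclideanSpace ℝ (Fin n) → ℝ)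
    (x : EuclideanSpace ℝ (Fin n)) : ℝ :=
  ∑ i : Fin n, iteratedFDeriv ℝ 2 u x ![EuclideanSpace.single i 1, EuclideanSpace.single i 1]

noncomputable def x1 {n : ℕ} (x : EuclideanSpace ℝ (Fin n)) : ℝ :=
  if h : 0 < n then x ⟨0, h⟩ else 0

def halfSpace (n : ℕ) : Set (EuclideanSpace ℝ (Fin n)) := {x | 0 < x1 x}

noncomputable def aPlus (μ : ℝ) : ℝ := 1 / 2 + Real.sqrt (1 / 4 - μ)

noncomputable def aMinus (μ : ℝ) : ℝ := 1 / 2 - Real.sqrt (1 / 4 - μ)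

noncomputable def Lam (n : ℕ) (s : ℝ) : ℝ := s * (s + n - 2)


noncomputable def Jint (c : ℝ) (H : ℝ → ℝ) (t : ℝ) : ℝ :=
  ∫ l in (0:ℝ)..1, l ^ (c - 1) * H (l * t)

lemma mul_mem_Iio {t l : ℝ} (ht : t < 1) (hl : l ∈ Icc (0:ℝ) 1) : l * t < 1 := by
  rcases le_or_gt t 0 with h | h
  · nlinarith [hl.1, hl.2, mul_nonneg hl.1 (neg_nonneg.2 h)]
  · nlinarith [hl.1, hl.2]

lemma mul_mem_Icc' {t l A B : ℝ} (ht : t ∈ Icc A B) (hA : A ≤ 0) (hB : 0 ≤ B)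
    (hl : l ∈ Icc (0:ℝ) 1) : l * t ∈ Icc A B := by
  have h1 := hl.1
  have h2 := hl.2
  have h3 := ht.1
  have h4 := ht.2
  constructor
  · nlinarith [mul_nonneg h1 (sub_nonneg.2 h3)]
  · nlinarith [mul_nonneg h1 (sub_nonneg.2 h4)]

lemma rpow_integrable01 {c : ℝ} (hc : 0 < c) :
    IntervalIntegrable (fun l : ℝ => l ^ (c - 1)) MeasureTheory.volume 0 1 :=
  intervalIntegral.intervalIntegrable_rpow' (by linarith)

lemma Jint_meas {c : ℝ} {H : ℝ → ℝ} (hH : ContinuousOn H (Iio 1)) {t : ℝ} (ht : t < 1) :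
    MeasureTheory.AEStronglyMeasurable (fun l : ℝ => l ^ (c - 1) * H (l * t))
      (MeasureTheory.volume.restrict (uIoc 0 1)) := by
  apply ContinuousOn.aestronglyMeasurable _ measurableSet_uIoc
  rw [uIoc_of_le zero_le_one]
  apply ContinuousOn.mul
  · intro l hl
    exact (Real.continuousAt_rpow_const _ _ (Or.inl hl.1.ne')).continuousWithinAt
  · apply hH.comp (by fun_prop)
    intro l hl
    exact mul_mem_Iio ht ⟨hl.1.le, hl.2⟩

lemma Jint_bound_exists {H : ℝ → ℝ} (hH : ContinuousOn H (Iio 1)) {t0 : ℝ} (ht : t0 < 1) :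
    ∃ A B M : ℝ, A < t0 ∧ t0 < B ∧ B < 1 ∧
      ∀ t ∈ Icc A B, ∀ l ∈ Icc (0:ℝ) 1, |H (l * t)| ≤ M := by
  obtain ⟨B, hB1, hB2⟩ := exists_between (show max t0 0 < 1 from max_lt ht one_pos)
  have hBt := (le_max_left _ _).trans_lt hB1
  have hB0 := (le_max_right _ _).trans_lt hB1
  have hc : ContinuousOn H (Icc (min (t0 - 1) 0) B) :=
    hH.mono (fun x hx => lt_of_le_of_lt hx.2 hB2)
  obtain ⟨M, hM⟩ := isCompact_Icc.exists_bound_of_continuousOn hc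
  refine ⟨t0 - 1, B, M, by linarith, hBt, hB2, fun t ht l hl => ?_⟩
  exact hM _ (mul_mem_Icc' ⟨(min_le_left _ _).trans ht.1, ht.2⟩ (min_le_right _ _) hB0.le hl)

lemma Jint_pt_bound {c M l y : ℝ} (hl : l ∈ uIoc (0:ℝ) 1) (h : |y| ≤ M) :
    ‖l ^ (c - 1) * y‖ ≤ l ^ (c - 1) * M := by
  rw [uIoc_of_le zero_le_one] at hl
  have := Real.rpow_pos_of_pos hl.1 (c - 1)
  rw [norm_mul, Real.norm_of_nonneg this.le]
  exact mul_le_mul_of_nonneg_left h this.le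

lemma uIoc01 {l : ℝ} (hl : l ∈ uIoc (0:ℝ) 1) : l ∈ Icc (0:ℝ) 1 := by
  rw [uIoc_of_le zero_le_one] at hl
  exact ⟨hl.1.le, hl.2⟩

lemma Jint_cont {c : ℝ} (hc : 0 < c) {H : ℝ → ℝ} (hH : ContinuousOn H (Iio 1)) :
    ContinuousOn (Jint c H) (Iio 1) := by
  intro t0 ht0
  apply ContinuousAt.continuousWithinAt
  obtain ⟨A, B, M, hA, hB, hB1, hM⟩ := Jint_bound_exists hH ht0
  refine intervalIntegral.continuousAt_of_dominated_interval (bound := fun l => l ^ (c - 1) * M)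
    ?_ ?_ ((rpow_integrable01 hc).mul_const M) ?_
  · filter_upwards [Iio_mem_nhds ht0] with t ht using Jint_meas hH ht
  · filter_upwards [Icc_mem_nhds hA hB] with t ht
    filter_upwards with l hl
    exact Jint_pt_bound hl (hM t ht l (uIoc01 hl))
  · filter_upwards with l hl
    apply ContinuousAt.mul continuousAt_const
    have : ContinuousAt H (l * t0) :=
      hH.continuousAt (Iio_mem_nhds (mul_mem_Iio ht0 (uIoc01 hl)))
    exact ContinuousAt.comp (f := fun t => l * t) this (by fun_prop)

lemma Jint_integrable {c : ℝ} (hc : 0 < c) {H : ℝ → ℝ} (hH : ContinuousOn H (Iio 1)) {t : ℝ}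
    (ht : t < 1) :
    IntervalIntegrable (fun l : ℝ => l ^ (c - 1) * H (l * t)) MeasureTheory.volume 0 1 := by
  obtain ⟨A, B, M, hA, hB, hB1, hM⟩ := Jint_bound_exists hH ht
  refine ((rpow_integrable01 hc).mul_const M).mono_fun' (Jint_meas hH ht) ?_
  refine (MeasureTheory.ae_restrict_iff' measurableSet_uIoc).2 ?_
  filter_upwards with l hl
  exact Jint_pt_bound hl (hM t ⟨hA.le, hB.le⟩ l (uIoc01 hl))

lemma Jint_deriv {c : ℝ} (hc : 0 < c) {H H1 : ℝ → ℝ} (hH : ∀ t < 1, HasDerivAt H (H1 t) t)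
    (hH1 : ContinuousOn H1 (Iio 1)) {t : ℝ} (ht : t < 1) :
    HasDerivAt (Jint c H) (Jint (c + 1) H1 t) t := by
  have hHc : ContinuousOn H (Iio 1) := fun s hs => (hH s hs).continuousAt.continuousWithinAt
  obtain ⟨A, B, M, hA, hB, hB1, hM⟩ := Jint_bound_exists hH1 ht
  have key := intervalIntegral.hasDerivAt_integral_of_dominated_loc_of_deriv_le
    (μ := MeasureTheory.volume) (a := 0) (b := 1) (x₀ := t) (s := Icc A B)
    (bound := fun l => l ^ (c + 1 - 1) * M)
    (F := fun t l => l ^ (c - 1) * H (l * t)) (F' := fun t l => l ^ (c + 1 - 1) * H1 (l * t))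
    (Icc_mem_nhds hA hB) (by filter_upwards [Iio_mem_nhds ht] with t ht using Jint_meas hHc ht)
    (Jint_integrable hc hHc ht) (Jint_meas hH1 ht)
    (by
      filter_upwards with l hl s hs
      exact Jint_pt_bound hl (hM s hs l (uIoc01 hl)))
    ((rpow_integrable01 (by linarith : 0 < c + 1)).mul_const M)
    (by
      filter_upwards with l hl s hs
      have h1 : l * s < 1 := mul_mem_Iio (hs.2.trans_lt hB1) (uIoc01 hl)
      have h2 : HasDerivAt (fun s => l * s) l s := by
        simpa using (hasDerivAt_id s).const_mul l
      have h3 := ((hH _ h1).comp s h2).const_mul (l ^ (c - 1))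
      have hl0 : 0 < l := by
        rw [uIoc_of_le zero_le_one] at hl; exact hl.1
      refine h3.congr_deriv ?_
      rw [show c + 1 - 1 = (c - 1) + 1 by ring, Real.rpow_add hl0, Real.rpow_one]
      ring)
  exact key.2

lemma Jint_zero {c : ℝ} (hc : 0 < c) (H : ℝ → ℝ) : Jint c H 0 = H 0 / c := by
  unfold Jint
  simp only [mul_zero]
  rw [intervalIntegral.integral_mul_const, integral_rpow (Or.inl (by linarith))]
  rw [Real.one_rpow, sub_add_cancel, Real.zero_rpow hc.ne']
  field_simp
  ring

lemma Jint_eq {c : ℝ} (H : ℝ → ℝ) {t : ℝ} (ht : 0 < t) :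
    t ^ c * Jint c H t = ∫ s in (0:ℝ)..t, s ^ (c - 1) * H s := by
  have h := intervalIntegral.integral_comp_mul_right (a := 0) (b := 1)
    (fun s : ℝ => s ^ (c - 1) * H s) ht.ne'
  rw [zero_mul, one_mul] at h
  have h2 : ∫ l in (0:ℝ)..1, (l * t) ^ (c - 1) * H (l * t) = t ^ (c - 1) * Jint c H t := by
    unfold Jint
    rw [← intervalIntegral.integral_const_mul]
    apply intervalIntegral.integral_congr
    intro l hl
    rw [uIcc_of_le zero_le_one] at hl
    simp only
    rw [Real.mul_rpow hl.1 ht.le]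
    ring
  rw [h2, smul_eq_mul] at h
  have h3 : t ^ c = t * t ^ (c - 1) := by
    rw [mul_comm, ← Real.rpow_add_one ht.ne']
    congr 1
    ring
  rw [h3, mul_assoc, h]
  field_simp

lemma Jint_sub {c : ℝ} (hc : 0 < c) {H H' : ℝ → ℝ} (hH : ContinuousOn H (Iio 1))
    (hH' : ContinuousOn H' (Iio 1)) {t : ℝ} (ht : t < 1) :
    Jint c H t - Jint c H' t = Jint c (fun s => H s - H' s) t := by
  unfold Jint
  rw [← intervalIntegral.integral_sub (Jint_integrable hc hH ht) (Jint_integrable hc hH' ht)]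
  congr 1
  ext l
  ring

lemma beta_integrable {c η : ℝ} (hc : 0 < c) (hη : 0 < η) :
    IntervalIntegrable (fun l : ℝ => l ^ (c - 1) * (1 - l) ^ (η - 1))
      MeasureTheory.volume 0 1 := by
  have h := (Complex.betaIntegral_convergent (u := (c : ℂ)) (v := (η : ℂ)) (by simpa) (by simpa)).norm
  refine h.congr_ae ?_
  refine (MeasureTheory.ae_restrict_iff' measurableSet_uIoc).2 ?_
  have h1 : ∀ᵐ l : ℝ, l ≠ 1 := by
    simp [MeasureTheory.ae_iff]
  filter_upwards [h1] with l hl1 hl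
  rw [uIoc_of_le zero_le_one] at hl
  have h2 : l < 1 := lt_of_le_of_ne hl.2 hl1
  rw [norm_mul]
  congr 1
  · rw [Complex.norm_cpow_eq_rpow_re_of_pos hl.1]
    simp
  · rw [show (1 - (l:ℂ)) = ((1 - l : ℝ) : ℂ) by push_cast; rfl,
      Complex.norm_cpow_eq_rpow_re_of_pos (by linarith)]
    simp

noncomputable def Cbeta (c η : ℝ) : ℝ := ∫ l in (0:ℝ)..1, l ^ (c - 1) * (1 - l) ^ (η - 1)

lemma Cbeta_nonneg (c η : ℝ) : 0 ≤ Cbeta c η := by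
  apply intervalIntegral.integral_nonneg zero_le_one
  intro l hl
  exact mul_nonneg (Real.rpow_nonneg hl.1 _) (Real.rpow_nonneg (by linarith [hl.2]) _)

/-- key kernel bound -/
lemma Jint_bound {c γ δ η M t : ℝ} (hc : 0 < c) (hη : 0 < η) (hηγ : η ≤ γ) (hηδ : 2 * η ≤ 1 + δ)
    (hδ : δ ≤ 0)
    {H : ℝ → ℝ} (ht0 : 0 ≤ t) (ht : t < 1)
    (hM : ∀ s ∈ Icc 0 t, |H s| ≤ M * (1 - s) ^ (δ - γ)) :
    |(1 - t) ^ (γ - 1) * Jint c H t| ≤ Cbeta c η * M * (1 - t) ^ (η - 1) := by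
  have hM0 : 0 ≤ M := by
    have := hM 0 ⟨le_rfl, ht0⟩
    simp at this
    exact (abs_nonneg _).trans this
  have hx : 0 < 1 - t := by linarith
  have hpt : ∀ l ∈ Ioo (0:ℝ) 1, ‖(1 - t) ^ (γ - 1) * (l ^ (c - 1) * H (l * t))‖ ≤
      (l ^ (c - 1) * (1 - l) ^ (η - 1)) * (M * (1 - t) ^ (η - 1)) := by
    intro l hl
    have hlt : l * t ≤ t := by nlinarith [hl.1, hl.2]
    have hlt0 : 0 ≤ l * t := mul_nonneg hl.1.le ht0
    have hy : 1 - t ≤ 1 - l * t := by linarith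
    have hy2 : 1 - l ≤ 1 - l * t := by nlinarith [hl.1]
    have hy0 : 0 < 1 - l * t := by linarith
    have hl1 : 0 < 1 - l := by linarith [hl.2]
    have e1 : (1 - t) ^ (γ - 1) * (1 - l * t) ^ (δ - γ) ≤ (1 - t) ^ (η - 1) * (1 - l) ^ (η - 1) := by
      calc (1 - t) ^ (γ - 1) * (1 - l * t) ^ (δ - γ)
          = (1 - t) ^ (η - 1) * ((1 - t) ^ (γ - η) * (1 - l * t) ^ (δ - γ)) := by
            rw [← mul_assoc, ← Real.rpow_add hx]
            congr 2
            ring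
        _ ≤ (1 - t) ^ (η - 1) * ((1 - l * t) ^ (γ - η) * (1 - l * t) ^ (δ - γ)) := by
            gcongr
        _ = (1 - t) ^ (η - 1) * (1 - l * t) ^ (δ - η) := by
            rw [← Real.rpow_add hy0]
            congr 2
            ring
        _ ≤ (1 - t) ^ (η - 1) * (1 - l) ^ (δ - η) := by
            apply mul_le_mul_of_nonneg_left _ (Real.rpow_nonneg hx.le _)
            exact Real.rpow_le_rpow_of_nonpos hl1 hy2 (by linarith)
        _ ≤ _ := by
            apply mul_le_mul_of_nonneg_left _ (Real.rpow_nonneg hx.le _)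
            exact Real.rpow_le_rpow_of_exponent_ge hl1 (by linarith [hl.1]) (by linarith)
    have p1 := Real.rpow_nonneg hx.le (γ - 1)
    have p2 := Real.rpow_nonneg hl.1.le (c - 1)
    rw [norm_mul, norm_mul, Real.norm_of_nonneg p1, Real.norm_of_nonneg p2, Real.norm_eq_abs]
    calc (1 - t) ^ (γ - 1) * (l ^ (c - 1) * |H (l * t)|)
        ≤ (1 - t) ^ (γ - 1) * (l ^ (c - 1) * (M * (1 - l * t) ^ (δ - γ))) := by
          gcongr
          exact hM _ ⟨hlt0, hlt⟩
      _ = (l ^ (c - 1) * M) * ((1 - t) ^ (γ - 1) * (1 - l * t) ^ (δ - γ)) := by ring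
      _ ≤ (l ^ (c - 1) * M) * ((1 - t) ^ (η - 1) * (1 - l) ^ (η - 1)) := by gcongr
      _ = _ := by ring
  unfold Jint
  rw [← intervalIntegral.integral_const_mul]
  have := intervalIntegral.norm_integral_le_of_norm_le (a := 0) (b := 1) (μ := MeasureTheory.volume)
    (f := fun l => (1 - t) ^ (γ - 1) * (l ^ (c - 1) * H (l * t)))
    (g := fun l => (l ^ (c - 1) * (1 - l) ^ (η - 1)) * (M * (1 - t) ^ (η - 1)))
    zero_le_one ?_ ((beta_integrable hc hη).mul_const _)
  · rw [Real.norm_eq_abs] at this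
    refine this.trans (le_of_eq ?_)
    rw [intervalIntegral.integral_mul_const]
    unfold Cbeta
    ring
  · have h1 : ∀ᵐ l : ℝ, l ≠ 1 := by
      simp [MeasureTheory.ae_iff]
    filter_upwards [h1] with l hl1 hl
    exact hpt l ⟨hl.1, lt_of_le_of_ne hl.2 hl1⟩


noncomputable def Dop (c γ : ℝ) (N : ℝ → ℝ → ℝ) (f : ℝ → ℝ) (t : ℝ) : ℝ :=
  1 / 4 * ((1 - t) ^ (γ - 1) * Jint c (fun s => (1 - s) ^ (-γ) * N s (f s)) t)

structure NHyp (c γ δ η B : ℝ) (N : ℝ → ℝ → ℝ) : Prop where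
  hc : 0 < c
  hη : 0 < η
  hηγ : η ≤ γ
  hηδ : 2 * η ≤ 1 + δ
  hδ : δ ≤ 0
  hcont : ∀ f : ℝ → ℝ, Continuous f → ContinuousOn (fun t => N t (f t)) (Iio 1)
  hB : ∀ t ∈ Ico (0:ℝ) 1, ∀ y, |N t y| ≤ B * (1 - t) ^ δ
  hL : ∀ t ∈ Ico (0:ℝ) 1, ∀ y z, |N t y - N t z| ≤ B * (1 - t) ^ δ * |y - z|

section
variable {c γ δ η B : ℝ} {N : ℝ → ℝ → ℝ}

lemma one_sub_rpow_cont (r : ℝ) : ContinuousOn (fun t : ℝ => (1 - t) ^ r) (Iio 1) := by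
  intro t ht
  apply ContinuousAt.continuousWithinAt
  apply ContinuousAt.rpow_const (by fun_prop)
  left
  have : t < 1 := ht
  linarith

lemma NHyp.Hcont (h : NHyp c γ δ η B N) {f : ℝ → ℝ} (hf : Continuous f) :
    ContinuousOn (fun s => (1 - s) ^ (-γ) * N s (f s)) (Iio 1) :=
  (one_sub_rpow_cont _).mul (h.hcont f hf)

lemma NHyp.Dcont (h : NHyp c γ δ η B N) {f : ℝ → ℝ} (hf : Continuous f) :
    ContinuousOn (Dop c γ N f) (Iio 1) :=
  continuousOn_const.mul ((one_sub_rpow_cont _).mul (Jint_cont h.hc (h.Hcont hf)))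

lemma NHyp.B_nonneg (h : NHyp c γ δ η B N) : 0 ≤ B := by
  have := h.hB 0 ⟨le_rfl, one_pos⟩ 0
  simp at this
  exact (abs_nonneg _).trans this

lemma NHyp.Dbound (h : NHyp c γ δ η B N) {f : ℝ → ℝ} {t : ℝ}
    (ht : t ∈ Ico (0:ℝ) 1) :
    |Dop c γ N f t| ≤ Cbeta c η * B * (1 - t) ^ (η - 1) := by
  have h1 := Jint_bound h.hc h.hη h.hηγ h.hηδ h.hδ (M := B)
    (H := fun s => (1 - s) ^ (-γ) * N s (f s)) ht.1 ht.2 (by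
      intro s hs
      have hs1 : 0 < 1 - s := by linarith [hs.2, ht.2]
      have p := Real.rpow_nonneg hs1.le (-γ)
      rw [abs_mul, abs_of_nonneg p]
      calc (1 - s) ^ (-γ) * |N s (f s)| ≤ (1 - s) ^ (-γ) * (B * (1 - s) ^ δ) := by
            gcongr
            exact h.hB s ⟨hs.1, by linarith⟩ _
        _ = B * (1 - s) ^ (δ - γ) := by
            rw [sub_eq_add_neg δ γ, Real.rpow_add hs1]; ring)
  unfold Dop
  rw [abs_mul, abs_of_pos (by norm_num : (0:ℝ) < 1 / 4)]
  linarith [abs_nonneg ((1 - t) ^ (γ - 1) * Jint c (fun s => (1 - s) ^ (-γ) * N s (f s)) t)]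

lemma NHyp.Dlip (h : NHyp c γ δ η B N) {f g : ℝ → ℝ} (hf : Continuous f) (hg : Continuous g)
    {t m : ℝ} (ht : t ∈ Ico (0:ℝ) 1) (hm : ∀ s ∈ Icc 0 t, |f s - g s| ≤ m) :
    |Dop c γ N f t - Dop c γ N g t| ≤ Cbeta c η * B * (1 - t) ^ (η - 1) * m := by
  have hB := h.B_nonneg
  have h1 := Jint_bound h.hc h.hη h.hηγ h.hηδ h.hδ (M := B * m)
    (H := fun s => (1 - s) ^ (-γ) * N s (f s) - (1 - s) ^ (-γ) * N s (g s)) ht.1 ht.2 (by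
      intro s hs
      have hs1 : 0 < 1 - s := by linarith [hs.2, ht.2]
      have p := Real.rpow_nonneg hs1.le (-γ)
      have p2 := Real.rpow_nonneg hs1.le δ
      rw [← mul_sub, abs_mul, abs_of_nonneg p]
      calc (1 - s) ^ (-γ) * |N s (f s) - N s (g s)|
          ≤ (1 - s) ^ (-γ) * (B * (1 - s) ^ δ * |f s - g s|) := by
            gcongr
            exact h.hL s ⟨hs.1, by linarith⟩ _ _
        _ ≤ (1 - s) ^ (-γ) * (B * (1 - s) ^ δ * m) := by
            gcongr
            exact hm s hs
        _ = B * m * (1 - s) ^ (δ - γ) := by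
            rw [sub_eq_add_neg δ γ, Real.rpow_add hs1]; ring)
  rw [← Jint_sub h.hc (h.Hcont hf) (h.Hcont hg) ht.2] at h1
  unfold Dop
  rw [← mul_sub, ← mul_sub, abs_mul, abs_of_pos (by norm_num : (0:ℝ) < 1 / 4)]
  have h2 := (abs_nonneg _).trans h1
  calc _ ≤ 1 / 4 * _ := mul_le_mul_of_nonneg_left h1 (by norm_num)
    _ ≤ _ := by linarith

lemma wt_integrable (hη : 0 < η) :
    IntervalIntegrable (fun t : ℝ => (1 - t) ^ (η - 1)) MeasureTheory.volume 0 1 := by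
  have := (intervalIntegral.intervalIntegrable_rpow' (a := 1) (b := 0) (r := η - 1)
    (by linarith)).comp_sub_left 1
  simpa using this

lemma NHyp.Dint (h : NHyp c γ δ η B N) {f : ℝ → ℝ} (hf : Continuous f) :
    IntervalIntegrable (Dop c γ N f) MeasureTheory.volume 0 1 := by
  have h1 := (wt_integrable h.hη).const_mul (Cbeta c η * B)
  rw [intervalIntegrable_iff_integrableOn_Ioo_of_le zero_le_one] at h1 ⊢
  refine MeasureTheory.Integrable.mono' h1 ?_ ?_
  · exact ContinuousOn.aestronglyMeasurable ((h.Dcont hf).mono fun x hx => hx.2) measurableSet_Ioo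
  · refine (MeasureTheory.ae_restrict_iff' measurableSet_Ioo).2 ?_
    filter_upwards with t ht using h.Dbound ⟨ht.1.le, ht.2⟩

lemma sub_int {f : ℝ → ℝ} (h : IntervalIntegrable f MeasureTheory.volume 0 1) {t : ℝ}
    (ht : t ∈ Icc (0:ℝ) 1) : IntervalIntegrable f MeasureTheory.volume 0 t :=
  h.mono_set (by rw [uIcc_of_le zero_le_one, uIcc_of_le ht.1]; exact Icc_subset_Icc_right ht.2)

noncomputable def Ewt (R η t : ℝ) : ℝ := Real.exp (2 * R / η * (1 - (1 - t) ^ η))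

lemma Ewt_cont {R : ℝ} (hη : 0 < η) : Continuous (Ewt R η) := by
  unfold Ewt
  apply Real.continuous_exp.comp
  apply continuous_const.mul
  apply continuous_const.sub
  exact Continuous.rpow_const (by fun_prop) (fun x => Or.inr hη.le)

lemma Ewt_pos {R t : ℝ} : 0 < Ewt R η t := Real.exp_pos _

lemma Ewt_mono {R s t : ℝ} (hR : 0 ≤ R) (hη : 0 < η) (hst : s ≤ t) (ht : t ≤ 1) :
    Ewt R η s ≤ Ewt R η t := by
  unfold Ewt
  apply Real.exp_le_exp.2
  apply mul_le_mul_of_nonneg_left _ (by positivity)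
  have : (1 - t) ^ η ≤ (1 - s) ^ η := Real.rpow_le_rpow (by linarith) (by linarith) hη.le
  linarith

lemma Ewt_zero {R : ℝ} : Ewt R η 0 = 1 := by simp [Ewt]

lemma Ewt_deriv {R t : ℝ} (hη : 0 < η) (ht : t < 1) :
    HasDerivAt (Ewt R η) (2 * R * (1 - t) ^ (η - 1) * Ewt R η t) t := by
  have h1 : HasDerivAt (fun t : ℝ => 1 - t) (-1) t := by
    simpa using (hasDerivAt_id t).const_sub 1
  have h2 := h1.rpow_const (p := η) (Or.inl (by linarith : (1:ℝ) - t ≠ 0))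
  have h3 := ((h2.const_sub 1).const_mul (2 * R / η)).exp
  refine h3.congr_deriv ?_
  unfold Ewt
  field_simp
  try ring

lemma Ewt_wt_int {R : ℝ} (hη : 0 < η) :
    IntervalIntegrable (fun t => 2 * R * (1 - t) ^ (η - 1) * Ewt R η t)
      MeasureTheory.volume 0 1 :=
  ((wt_integrable hη).const_mul (2 * R)).mul_continuousOn (Ewt_cont hη).continuousOn

lemma Ewt_integral {R t : ℝ} (hη : 0 < η) (ht : t ∈ Icc (0:ℝ) 1) :
    ∫ s in (0:ℝ)..t, 2 * R * (1 - s) ^ (η - 1) * Ewt R η s = Ewt R η t - 1 := by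
  have := intervalIntegral.integral_eq_sub_of_hasDerivAt_of_le ht.1
    (f := Ewt R η) (f' := fun s => 2 * R * (1 - s) ^ (η - 1) * Ewt R η s)
    (Ewt_cont hη).continuousOn
    (fun x hx => Ewt_deriv hη (hx.2.trans_le ht.2)) (sub_int (Ewt_wt_int hη) ht)
  rw [this, Ewt_zero]

lemma wt_integral (hη : 0 < η) : ∫ s in (0:ℝ)..1, (1 - s) ^ (η - 1) = 1 / η := by
  have := intervalIntegral.integral_comp_sub_left (a := 0) (b := 1) (fun x : ℝ => x ^ (η - 1)) 1
  rw [this, sub_self, sub_zero, integral_rpow (Or.inl (by linarith))]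
  rw [Real.one_rpow, sub_add_cancel, Real.zero_rpow hη.ne', sub_zero]

/-- unfolding of the weighted unknown -/
noncomputable def fext (R η : ℝ) (v : C(Icc (0:ℝ) 1, ℝ)) (t : ℝ) : ℝ :=
  Ewt R η t * IccExtend zero_le_one v t

lemma fext_cont {R : ℝ} (hη : 0 < η) (v : C(Icc (0:ℝ) 1, ℝ)) : Continuous (fext R η v) :=
  (Ewt_cont hη).mul v.continuous.Icc_extend'

lemma NHyp.prim_cont (h : NHyp c γ δ η B N) {f : ℝ → ℝ} (hf : Continuous f) :
    ContinuousOn (fun t => ∫ s in (0:ℝ)..t, Dop c γ N f s) (Icc 0 1) := by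
  have := intervalIntegral.continuousOn_primitive_interval (a := 0) (b := 1)
    (f := Dop c γ N f) (μ := MeasureTheory.volume) (by
      rw [uIcc_of_le zero_le_one]
      exact (intervalIntegrable_iff_integrableOn_Icc_of_le zero_le_one).1 (h.Dint hf))
  rwa [uIcc_of_le zero_le_one] at this

noncomputable def NHyp.S (h : NHyp c γ δ η B N) (A : ℝ) (v : C(Icc (0:ℝ) 1, ℝ)) :
    C(Icc (0:ℝ) 1, ℝ) where
  toFun t := (Ewt (Cbeta c η * B) η t)⁻¹ *
    (A + ∫ s in (0:ℝ)..t, Dop c γ N (fext (Cbeta c η * B) η v) s)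
  continuous_toFun := by
    apply Continuous.mul
    · exact ((Ewt_cont h.hη).comp continuous_subtype_val).inv₀ (fun x => Ewt_pos.ne')
    · apply continuous_const.add
      exact (h.prim_cont (fext_cont h.hη v)).domRestrict

lemma NHyp.S_contr (h : NHyp c γ δ η B N) (A : ℝ) : ContractingWith (1 / 2) (h.S A) := by
  refine ⟨by norm_num [← NNReal.coe_lt_coe], LipschitzWith.of_dist_le_mul ?_⟩
  intro v w
  have hR : 0 ≤ Cbeta c η * B := mul_nonneg (Cbeta_nonneg _ _) h.B_nonneg
  rw [ContinuousMap.dist_le (by positivity)]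
  intro t
  set R := Cbeta c η * B with hRdef
  have hfv := fext_cont (R := R) h.hη v
  have hfw := fext_cont (R := R) h.hη w
  have hE : 0 < Ewt R η t := Ewt_pos
  have e1 : h.S A v t - h.S A w t = (Ewt R η t)⁻¹ *
      ∫ s in (0:ℝ)..t, (Dop c γ N (fext R η v) s - Dop c γ N (fext R η w) s) := by
    rw [intervalIntegral.integral_sub (sub_int (h.Dint hfv) t.2) (sub_int (h.Dint hfw) t.2)]
    simp only [NHyp.S, ContinuousMap.coe_mk, ← hRdef]
    ring
  have e2 : ‖∫ s in (0:ℝ)..t, (Dop c γ N (fext R η v) s - Dop c γ N (fext R η w) s)‖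
      ≤ ∫ s in (0:ℝ)..t, (2 * R * (1 - s) ^ (η - 1) * Ewt R η s) * (dist v w / 2) := by
    apply intervalIntegral.norm_integral_le_of_norm_le t.2.1
    · have h1 : ∀ᵐ l : ℝ, l ≠ 1 := by
        simp [MeasureTheory.ae_iff]
      filter_upwards [h1] with s hs1 hs
      have hs2 : s < 1 := lt_of_le_of_ne (hs.2.trans t.2.2) hs1
      have := h.Dlip hfv hfw (t := s) (m := Ewt R η s * dist v w) ⟨hs.1.le, hs2⟩ (by
        intro r hr
        unfold fext
        rw [← mul_sub, abs_mul, abs_of_pos Ewt_pos]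
        apply mul_le_mul (Ewt_mono hR h.hη hr.2 hs2.le) _ (abs_nonneg _) Ewt_pos.le
        exact ContinuousMap.dist_apply_le_dist (f := v) (g := w) (projIcc 0 1 zero_le_one r))
      rw [Real.norm_eq_abs]
      refine this.trans (le_of_eq ?_)
      rw [← hRdef]
      ring
    · exact (sub_int (Ewt_wt_int h.hη) t.2).mul_const _
  rw [intervalIntegral.integral_mul_const, Ewt_integral h.hη t.2] at e2
  rw [Real.dist_eq, e1, abs_mul, abs_of_pos (inv_pos.2 hE)]
  rw [Real.norm_eq_abs] at e2
  have hd : 0 ≤ dist v w := dist_nonneg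
  calc (Ewt R η t)⁻¹ * _ ≤ (Ewt R η t)⁻¹ * ((Ewt R η t - 1) * (dist v w / 2)) := by
        gcongr
    _ ≤ (Ewt R η t)⁻¹ * ((Ewt R η t) * (dist v w / 2)) := by
        gcongr
        linarith
    _ = _ := by
        field_simp
        push_cast
        ring

/-- Shooting: existence of solution with prescribed end value. -/
theorem NHyp.shoot (h : NHyp c γ δ η B N) (c0 : ℝ) :
    ∃ (A : ℝ) (f : ℝ → ℝ), Continuous f ∧ f 1 = c0 ∧
      ∀ t ∈ Icc (0:ℝ) 1, f t = A + ∫ s in (0:ℝ)..t, Dop c γ N f s := by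
  set R := Cbeta c η * B with hRdef
  have hR : 0 ≤ R := mul_nonneg (Cbeta_nonneg _ _) h.B_nonneg
  let V : ℝ → C(Icc (0:ℝ) 1, ℝ) := fun A => ContractingWith.fixedPoint (h.S A) (h.S_contr A)
  have hV : ∀ A, h.S A (V A) = V A := fun A => (h.S_contr A).fixedPoint_isFixedPt
  have hf : ∀ A, ∀ t ∈ Icc (0:ℝ) 1, fext R η (V A) t =
      A + ∫ s in (0:ℝ)..t, Dop c γ N (fext R η (V A)) s := by
    intro A t ht
    have e : V A ⟨t, ht⟩ = _ := (congrArg (fun w => w ⟨t, ht⟩) (hV A)).symm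
    simp only [NHyp.S, ContinuousMap.coe_mk, ← hRdef] at e
    conv_lhs => unfold fext
    rw [IccExtend_of_mem _ _ ht, e, mul_inv_cancel_left₀ Ewt_pos.ne']
  have hdist : ∀ A A', dist (V A) (V A') ≤ 2 * |A - A'| := by
    intro A A'
    have := (h.S_contr A).dist_fixedPoint_fixedPoint_of_dist_le' (h.S A') (hV A) (hV A')
      (C := |A - A'|) (by
        intro z
        rw [ContinuousMap.dist_le (abs_nonneg _)]
        intro t
        simp only [NHyp.S, ContinuousMap.coe_mk, Real.dist_eq, ← hRdef]
        rw [← mul_sub, add_sub_add_right_eq_sub, abs_mul, abs_of_pos (inv_pos.2 Ewt_pos)]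
        have h1 : 1 ≤ Ewt R η t := by
          have h2 := Ewt_mono hR h.hη t.2.1 t.2.2
          rwa [Ewt_zero] at h2
        exact mul_le_of_le_one_left (abs_nonneg _) (inv_le_one_of_one_le₀ h1))
    refine this.trans (le_of_eq ?_)
    push_cast
    ring
  have hone : (1:ℝ) ∈ Icc (0:ℝ) 1 := ⟨zero_le_one, le_rfl⟩
  have hcont : Continuous (fun A => fext R η (V A) 1) := by
    have hVc : Continuous V := by
      have : LipschitzWith 2 V := LipschitzWith.of_dist_le_mul (by
        intro A A'
        rw [Real.dist_eq]
        exact_mod_cast hdist A A')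
      exact this.continuous
    unfold fext
    simp only [IccExtend_of_mem _ _ hone]
    exact continuous_const.mul ((ContinuousEvalConst.continuous_eval_const _).comp hVc)
  have hbd : ∀ A, |fext R η (V A) 1 - A| ≤ R / η := by
    intro A
    rw [hf A 1 hone, add_sub_cancel_left]
    have := intervalIntegral.norm_integral_le_of_norm_le (a := 0) (b := 1)
      (μ := MeasureTheory.volume)
      (f := Dop c γ N (fext R η (V A))) (g := fun s => R * (1 - s) ^ (η - 1)) zero_le_one (by
        have h1 : ∀ᵐ l : ℝ, l ≠ 1 := by
          simp [MeasureTheory.ae_iff]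
        filter_upwards [h1] with s hs1 hs
        exact h.Dbound ⟨hs.1.le, lt_of_le_of_ne hs.2 hs1⟩)
        ((wt_integrable h.hη).const_mul R)
    rw [intervalIntegral.integral_const_mul, wt_integral h.hη] at this
    rw [Real.norm_eq_abs] at this
    refine this.trans (le_of_eq (by ring))
  obtain ⟨A, hA⟩ := mem_range_of_exists_le_of_exists_ge hcont (c := c0)
    ⟨c0 - R / η, by linarith [(abs_le.1 (hbd (c0 - R / η))).2]⟩
    ⟨c0 + R / η, by linarith [(abs_le.1 (hbd (c0 + R / η))).1]⟩
  exact ⟨A, fext R η (V A), fext_cont h.hη _, hA, hf A⟩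
end


lemma prim_hasDeriv {D : ℝ → ℝ} (hD : ContinuousOn D (Iio 1)) (A : ℝ) {t : ℝ} (ht : t < 1) :
    HasDerivAt (fun t => A + ∫ s in (0:ℝ)..t, D s) (D t) t := by
  have hsub : uIcc 0 t ⊆ Iio (1:ℝ) := by
    intro x hx
    rcases le_total 0 t with h | h
    · rw [uIcc_of_le h] at hx; exact hx.2.trans_lt ht
    · rw [uIcc_of_ge h] at hx; exact hx.2.trans_lt one_pos
  have h1 : IntervalIntegrable D MeasureTheory.volume 0 t := (hD.mono hsub).intervalIntegrable
  have h2 := intervalIntegral.integral_hasDerivAt_right h1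
    (hD.stronglyMeasurableAtFilter isOpen_Iio t ht) (hD.continuousAt (Iio_mem_nhds ht))
  exact h2.const_add A

section
variable {c γ δ η B : ℝ} {N : ℝ → ℝ → ℝ}

lemma one_sub_rpow_deriv (r : ℝ) {t : ℝ} (ht : t < 1) :
    HasDerivAt (fun t : ℝ => (1 - t) ^ r) (-(r * (1 - t) ^ (r - 1))) t := by
  have h1 : HasDerivAt (fun t : ℝ => 1 - t) (-1) t := by
    simpa using (hasDerivAt_id t).const_sub 1
  have h2 := h1.rpow_const (p := r) (Or.inl (by linarith : (1:ℝ) - t ≠ 0))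
  exact h2.congr_deriv (by ring)

lemma NHyp.Dderiv (h : NHyp c γ δ η B N) {f : ℝ → ℝ} (hf : Continuous f) {t : ℝ}
    (ht : t ∈ Ioo (0:ℝ) 1) :
    HasDerivAt (Dop c γ N f)
      ((N t (f t) / 4 - (c - (c + 1 - γ) * t) * Dop c γ N f t) / (t * (1 - t))) t := by
  have ht0 : 0 < t := ht.1
  have ht1 : 0 < 1 - t := by linarith [ht.2]
  set H : ℝ → ℝ := fun s => (1 - s) ^ (-γ) * N s (f s) with hH
  have hHc : ContinuousOn H (Iio 1) := h.Hcont hf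
  set I : ℝ → ℝ := fun t => ∫ s in (0:ℝ)..t, s ^ (c - 1) * H s with hI
  have hIint : IntervalIntegrable (fun s => s ^ (c - 1) * H s) MeasureTheory.volume 0 t := by
    apply IntervalIntegrable.mul_continuousOn
    · exact intervalIntegral.intervalIntegrable_rpow' (by linarith [h.hc])
    · apply hHc.mono
      rw [uIcc_of_le ht0.le]
      intro x hx
      exact hx.2.trans_lt ht.2
  have hIc : ContinuousOn (fun s => s ^ (c - 1) * H s) (Ioo 0 1) := by
    apply ContinuousOn.mul
    · intro s hs
      exact (Real.continuousAt_rpow_const _ _ (Or.inl hs.1.ne')).continuousWithinAt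
    · exact hHc.mono (fun x hx => hx.2)
  have hId : HasDerivAt I (t ^ (c - 1) * H t) t :=
    intervalIntegral.integral_hasDerivAt_right hIint
      (hIc.stronglyMeasurableAtFilter isOpen_Ioo t ht) (hIc.continuousAt (Ioo_mem_nhds ht.1 ht.2))
  have hev : ∀ s ∈ Ioo (0:ℝ) 1, Dop c γ N f s = 1 / 4 * ((1 - s) ^ (γ - 1) * (s ^ (-c) * I s)) := by
    intro s hs
    unfold Dop
    rw [hI]
    simp only
    rw [← Jint_eq H hs.1, ← mul_assoc (s ^ (-c)), ← Real.rpow_add hs.1]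
    simp [hH]
  have hd1 := one_sub_rpow_deriv (γ - 1) ht.2
  have hd2 : HasDerivAt (fun s : ℝ => s ^ (-c)) (-c * t ^ (-c - 1)) t :=
    Real.hasDerivAt_rpow_const (Or.inl ht0.ne')
  have hd := (hd1.mul (hd2.mul hId)).const_mul (1 / 4)
  have hev2 : Dop c γ N f =ᶠ[nhds t] fun s => 1 / 4 * ((1 - s) ^ (γ - 1) * (s ^ (-c) * I s)) := by
    filter_upwards [Ioo_mem_nhds ht.1 ht.2] with s hs using hev s hs
  refine (hd.congr_of_eventuallyEq hev2).congr_deriv ?_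
  rw [eq_div_iff (by positivity), hev t ht]
  have e1 : (1 - t) ^ (γ - 1) = (1 - t) ^ (γ - 1 - 1) * (1 - t) := by
    rw [← Real.rpow_add_one ht1.ne']; congr 1; ring
  have e2 : t ^ (-c) = t ^ (-c - 1) * t := by
    rw [← Real.rpow_add_one ht0.ne']; congr 1; ring
  have e3 : t ^ (-c - 1) * t ^ (c - 1) * (t * t) = 1 := by
    rw [← Real.rpow_add ht0]
    rw [show -c - 1 + (c - 1) = (-2:ℝ) by ring, ← pow_two, ← Real.rpow_natCast t 2,
      ← Real.rpow_add ht0]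
    norm_num
  have e4 : N t (f t) = (1 - t) ^ (γ - 1 - 1) * (1 - t) * (1 - t) * H t := by
    rw [← e1, ← Real.rpow_add_one ht1.ne', hH]
    simp only
    rw [← mul_assoc, ← Real.rpow_add ht1]
    simp
  simp only [Pi.mul_apply]
  rw [e1, e2, e4]
  linear_combination (1 / 4 * (1 - t) ^ (γ - 1 - 1) * (1 - t) * (1 - t) * H t) * e3

lemma NHyp.Dzero (h : NHyp c γ δ η B N) (f : ℝ → ℝ) : 4 * (c * Dop c γ N f 0) = N 0 (f 0) := by
  unfold Dop
  rw [Jint_zero h.hc]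
  have := h.hc.ne'
  simp
  field_simp

/-- one-sided comparison principle -/
lemma comparison {h h1 h2 : ℝ → ℝ} (hc : 0 < c) (hcont : ContinuousOn h (Icc 0 1)) (hend : h 1 ≤ 0)
    (hd : ∀ t ∈ Ioo (0:ℝ) 1, HasDerivAt h (h1 t) t)
    (hd0 : HasDerivWithinAt h (h1 0) (Ici 0) 0)
    (hdd : ∀ t ∈ Ioo (0:ℝ) 1, HasDerivAt h1 (h2 t) t)
    (hpos : ∀ t ∈ Ioo (0:ℝ) 1, 0 < h t → 0 < t * (1 - t) * h2 t + (c - (c + 1 - γ) * t) * h1 t)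
    (hpos0 : 0 < h 0 → 0 < c * h1 0) : ∀ t ∈ Icc (0:ℝ) 1, h t ≤ 0 := by
  obtain ⟨t0, ht0, hmax⟩ := isCompact_Icc.exists_isMaxOn (nonempty_Icc.2 zero_le_one) hcont
  intro t ht
  by_contra! hcon
  have h0 : 0 < h t0 := hcon.trans_le (hmax ht)
  have hne1 : t0 ≠ 1 := by
    rintro rfl
    linarith
  rcases eq_or_lt_of_le ht0.1 with heq | hlt
  · subst heq
    have hp := pos_of_mul_pos_right (hpos0 h0) hc.le
    have htan := hasDerivWithinAt_iff_tendsto_slope.1 hd0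
    have : ∀ᶠ s in nhdsWithin 0 (Ici (0:ℝ) \ {0}), 0 < slope h 0 s :=
      (tendsto_order.1 htan).1 0 hp
    have hIoo : Ioo (0:ℝ) 1 ∈ nhdsWithin 0 (Ici (0:ℝ) \ {0}) := by
      have : (Ici (0:ℝ) \ {0}) = Ioi 0 := by ext x; simp [lt_iff_le_and_ne, eq_comm]
      rw [this]
      exact Ioo_mem_nhdsGT one_pos
    have hne : (nhdsWithin 0 (Ici (0:ℝ) \ {0})).NeBot := by
      have : (Ici (0:ℝ) \ {0}) = Ioi 0 := by ext x; simp [lt_iff_le_and_ne, eq_comm]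
      rw [this]
      infer_instance
    obtain ⟨s, hs1, hs2⟩ := (this.and hIoo).exists
    have hm := hmax (show s ∈ Icc (0:ℝ) 1 from ⟨hs2.1.le, hs2.2.le⟩)
    rw [slope_def_field] at hs1
    have : (h s - h 0) / (s - 0) ≤ 0 := div_nonpos_of_nonpos_of_nonneg (by
      have : h s ≤ h 0 := hm
      linarith) (by linarith [hs2.1])
    linarith
  · have htI : t0 ∈ Ioo (0:ℝ) 1 := ⟨hlt, lt_of_le_of_ne ht0.2 hne1⟩
    have hlm : IsLocalMax h t0 := hmax.isLocalMax (Icc_mem_nhds htI.1 htI.2)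
    have hz : h1 t0 = 0 := hlm.hasDerivAt_eq_zero (hd t0 htI)
    have hp := hpos t0 htI h0
    rw [hz, mul_zero, add_zero] at hp
    have h2p : 0 < h2 t0 := pos_of_mul_pos_right hp (mul_nonneg htI.1.le (by linarith [htI.2]))
    have hev : deriv h =ᶠ[nhds t0] h1 := by
      filter_upwards [Ioo_mem_nhds htI.1 htI.2] with s hs using (hd s hs).deriv
    have hmin : IsLocalMin h t0 := by
      apply isLocalMin_of_deriv_deriv_pos
      · rw [hev.deriv_eq, (hdd t0 htI).deriv]
        exact h2p
      · rw [(hd t0 htI).deriv, hz]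
      · exact (hd t0 htI).continuousAt
    have hconst : h =ᶠ[nhds t0] fun _ => h t0 := by
      filter_upwards [hlm, hmin] with s hs1 hs2 using le_antisymm hs1 hs2
    have hd1 : h1 =ᶠ[nhds t0] fun _ => 0 := by
      have := hconst.deriv
      filter_upwards [this, hev] with s hs1 hs2
      rw [← hs2, hs1]
      simp
    have := hd1.deriv_eq
    rw [(hdd t0 htI).deriv] at this
    simp at this
    linarith
end


noncomputable def psub (L e t : ℝ) : ℝ := Real.exp (-(L * (1 - t) ^ e))
noncomputable def psup (C e t : ℝ) : ℝ := C * (1 + (1 - t) ^ e)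
noncomputable def clipf (L C e t y : ℝ) : ℝ := max (psub L e t) (min y (psup C e t))
noncomputable def Nfun (L C e β p K t y : ℝ) : ℝ :=
  (1 - t) ^ β * clipf L C e t y ^ p - K * clipf L C e t y

section
variable {L C e β p K c γ b : ℝ}

lemma psub_deriv {t : ℝ} (ht : t < 1) :
    HasDerivAt (psub L e) (L * e * (1 - t) ^ (e - 1) * psub L e t) t := by
  have := ((one_sub_rpow_deriv e ht).const_mul L).neg.exp
  refine this.congr_deriv ?_
  simp only [psub, Pi.neg_apply]
  ring

lemma psub_deriv2 {t : ℝ} (ht : t < 1) :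
    HasDerivAt (fun t => L * e * (1 - t) ^ (e - 1) * psub L e t)
      (L * e * (-((e - 1) * (1 - t) ^ (e - 1 - 1)) * psub L e t +
        (1 - t) ^ (e - 1) * (L * e * (1 - t) ^ (e - 1) * psub L e t))) t := by
  have := (((one_sub_rpow_deriv (e - 1) ht).const_mul (L * e)).mul (psub_deriv (L := L) (e := e) ht))
  refine this.congr_deriv ?_
  ring

lemma psup_deriv {t : ℝ} (ht : t < 1) :
    HasDerivAt (psup C e) (-(C * e) * (1 - t) ^ (e - 1)) t := by
  have := ((one_sub_rpow_deriv e ht).const_add 1).const_mul C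
  exact this.congr_deriv (by ring)

lemma psup_deriv2 {t : ℝ} (ht : t < 1) :
    HasDerivAt (fun t => -(C * e) * (1 - t) ^ (e - 1))
      (C * e * ((e - 1) * (1 - t) ^ (e - 1 - 1))) t := by
  have := (one_sub_rpow_deriv (e - 1) ht).const_mul (-(C * e))
  exact this.congr_deriv (by ring)

lemma psub_cont (he : 0 < e) : Continuous (psub L e) := by
  unfold psub
  apply Real.continuous_exp.comp
  exact (continuous_const.mul
    (Continuous.rpow_const (by fun_prop) (fun x => Or.inr he.le))).neg

lemma psup_cont (he : 0 < e) : Continuous (psup C e) := by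
  unfold psup
  exact continuous_const.mul (continuous_const.add
    (Continuous.rpow_const (by fun_prop) (fun x => Or.inr he.le)))

lemma psub_pos (t : ℝ) : 0 < psub L e t := Real.exp_pos _

lemma psub_le_one (hL : 0 ≤ L) {t : ℝ} (ht : t ≤ 1) : psub L e t ≤ 1 := by
  unfold psub
  rw [Real.exp_le_one_iff]
  have := mul_nonneg hL (Real.rpow_nonneg (by linarith : 0 ≤ 1 - t) e)
  linarith

lemma psub_ge (hL : 0 ≤ L) (he : 0 < e) {t : ℝ} (ht : t ∈ Icc (0:ℝ) 1) :
    Real.exp (-L) ≤ psub L e t := by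
  unfold psub
  rw [Real.exp_le_exp]
  have := Real.rpow_le_one (by linarith [ht.2] : 0 ≤ 1 - t) (by linarith [ht.1]) he.le
  nlinarith

lemma psup_ge (hC : 0 ≤ C) {t : ℝ} (ht : t ≤ 1) : C ≤ psup C e t := by
  unfold psup
  have := mul_nonneg hC (Real.rpow_nonneg (by linarith : 0 ≤ 1 - t) e)
  linarith

lemma psup_le (hC : 0 ≤ C) (he : 0 < e) {t : ℝ} (ht : t ∈ Icc (0:ℝ) 1) : psup C e t ≤ 2 * C := by
  unfold psup
  have := Real.rpow_le_one (by linarith [ht.2] : 0 ≤ 1 - t) (by linarith [ht.1]) he.le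
  nlinarith

/-- strict subsolution -/
lemma psub_strict (he : 0 < e) (hp : 1 < p) (hL : 0 < L) (hb : b ≤ γ - e) (hbc : b ≤ c)
    (hβ : e - 1 ≤ β) (he1 : e ≤ 1) (hLb : 1 + |K| < 4 * L * e * b)
    {t : ℝ} (ht : t ∈ Ico (0:ℝ) 1) :
    (1 - t) ^ β * psub L e t ^ p - K * psub L e t <
     4 * (t * (1 - t) * (L * e * (-((e - 1) * (1 - t) ^ (e - 1 - 1)) * psub L e t +
        (1 - t) ^ (e - 1) * (L * e * (1 - t) ^ (e - 1) * psub L e t))) +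
      (c - (c + 1 - γ) * t) * (L * e * (1 - t) ^ (e - 1) * psub L e t)) := by
  have hq : 0 < 1 - t := by linarith [ht.2]
  have hq1 : 1 - t ≤ 1 := by linarith [ht.1]
  have hψ := psub_pos (L := L) (e := e) t
  have hψ1 := psub_le_one (e := e) hL.le ht.2.le
  have e1 : (1 - t) ^ (e - 1) = (1 - t) ^ (e - 1 - 1) * (1 - t) := by
    rw [← Real.rpow_add_one hq.ne']; congr 1; ring
  have hX1 : 1 ≤ (1 - t) ^ (e - 1) := Real.one_le_rpow_of_pos_of_le_one_of_nonpos hq hq1 (by linarith)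
  have hβX : (1 - t) ^ β ≤ (1 - t) ^ (e - 1) := Real.rpow_le_rpow_of_exponent_ge hq hq1 hβ
  have hpp : psub L e t ^ p ≤ psub L e t := by
    have := Real.rpow_le_rpow_of_exponent_ge hψ hψ1 hp.le
    rwa [Real.rpow_one] at this
  have hβ0 := Real.rpow_pos_of_pos hq β
  set X := (1 - t) ^ (e - 1) with hX
  set Y := (1 - t) ^ (e - 1 - 1) with hY
  set ψ := psub L e t with hψd
  have hrhs : 4 * (t * (1 - t) * (L * e * (-((e - 1) * Y) * ψ + X * (L * e * X * ψ))) +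
      (c - (c + 1 - γ) * t) * (L * e * X * ψ)) =
      4 * L * e * X * ψ * (t * (γ - e + L * e * (X * (1 - t))) + c * (1 - t)) := by
    linear_combination (4 * L * e * ψ * t * (e - 1)) * e1
  rw [hrhs]
  have hbr : b ≤ t * (γ - e + L * e * (X * (1 - t))) + c * (1 - t) := by
    have h1 : 0 ≤ L * e * (X * (1 - t)) := by positivity
    have h2 : t * b ≤ t * (γ - e + L * e * (X * (1 - t))) :=
      mul_le_mul_of_nonneg_left (by linarith) ht.1
    nlinarith
  have hl : (1 - t) ^ β * ψ ^ p - K * ψ ≤ (1 + |K|) * (X * ψ) := by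
    have h1 : (1 - t) ^ β * ψ ^ p ≤ X * ψ := mul_le_mul hβX hpp (by positivity) (by positivity)
    have h2 : - (K * ψ) ≤ |K| * (X * ψ) := by
      calc -(K * ψ) = (-K) * ψ := by ring
        _ ≤ |K| * ψ := by gcongr; exact neg_le_abs K
        _ ≤ |K| * (X * ψ) := by
          apply mul_le_mul_of_nonneg_left _ (abs_nonneg _)
          nlinarith
    linarith
  have hXψ : 0 < X * ψ := by positivity
  calc _ ≤ (1 + |K|) * (X * ψ) := hl
    _ < (4 * L * e * b) * (X * ψ) := mul_lt_mul_of_pos_right hLb hXψ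
    _ = 4 * L * e * X * ψ * b := by ring
    _ ≤ _ := mul_le_mul_of_nonneg_left hbr (by positivity)

/-- strict supersolution -/
lemma psup_strict (he : 0 < e) (hp : 1 < p) (hC : 0 < C) (hb : b ≤ γ - e) (hbc : b ≤ c)
    (hCb : ∀ q : ℝ, 0 < q → q ≤ 1 → 2 * |K| < C ^ (p - 1) * q ^ β + 4 * e * b * q ^ (e - 1))
    {t : ℝ} (ht : t ∈ Ico (0:ℝ) 1) :
     4 * (t * (1 - t) * (C * e * ((e - 1) * (1 - t) ^ (e - 1 - 1))) +
      (c - (c + 1 - γ) * t) * (-(C * e) * (1 - t) ^ (e - 1))) <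
      (1 - t) ^ β * psup C e t ^ p - K * psup C e t := by
  have hq : 0 < 1 - t := by linarith [ht.2]
  have hq1 : 1 - t ≤ 1 := by linarith [ht.1]
  have hG := psup_ge (e := e) hC.le ht.2.le
  have hG2 := psup_le hC.le he ⟨ht.1, ht.2.le⟩
  have e1 : (1 - t) ^ (e - 1) = (1 - t) ^ (e - 1 - 1) * (1 - t) := by
    rw [← Real.rpow_add_one hq.ne']; congr 1; ring
  have hpp : C * C ^ (p - 1) ≤ psup C e t ^ p := by
    have := Real.rpow_le_rpow hC.le hG (by linarith : 0 ≤ p)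
    refine le_trans (le_of_eq ?_) this
    rw [mul_comm, ← Real.rpow_add_one hC.ne']
    congr 1
    ring
  have hβ0 := Real.rpow_pos_of_pos hq β
  have hXp := Real.rpow_pos_of_pos hq (e - 1)
  have hk := hCb _ hq hq1
  set X := (1 - t) ^ (e - 1) with hX
  set Y := (1 - t) ^ (e - 1 - 1) with hY
  set G := psup C e t with hGd
  have hlhs : 4 * (t * (1 - t) * (C * e * ((e - 1) * Y)) +
      (c - (c + 1 - γ) * t) * (-(C * e) * X)) =
      -(4 * C * e * X * (t * (γ - e) + c * (1 - t))) := by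
    linear_combination (-4 * C * e * t * (e - 1)) * e1
  rw [hlhs]
  have hbr : b ≤ t * (γ - e) + c * (1 - t) := by
    have h2 : t * b ≤ t * (γ - e) :=
      mul_le_mul_of_nonneg_left hb ht.1
    nlinarith
  have h1 : 4 * C * e * X * b ≤ 4 * C * e * X * (t * (γ - e) + c * (1 - t)) :=
    mul_le_mul_of_nonneg_left hbr (by positivity)
  have h2 : (1 - t) ^ β * (C * C ^ (p - 1)) ≤ (1 - t) ^ β * G ^ p :=
    mul_le_mul_of_nonneg_left hpp hβ0.le
  have h3 : K * G ≤ |K| * (2 * C) := by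
    have : 0 ≤ G := hC.le.trans hG
    calc K * G ≤ |K| * G := by gcongr; exact le_abs_self K
      _ ≤ _ := by gcongr
  have h4 := mul_lt_mul_of_pos_left hk hC
  nlinarith

lemma choose_M {a k0 : ℝ} (ha : 0 < a) (hk : 0 ≤ k0) (he1 : e < 1) :
    ∃ M : ℝ, 0 ≤ M ∧ ∀ q : ℝ, 0 < q → q ≤ 1 → k0 < M * q ^ β + a * q ^ (e - 1) := by
  refine ⟨(k0 + 1) * ((k0 / a) ^ (β / (1 - e)) + 1), by positivity, fun q hq hq1 => ?_⟩
  have hqe := Real.rpow_pos_of_pos hq (e - 1)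
  have hqb := Real.rpow_pos_of_pos hq β
  rcases lt_or_ge k0 (a * q ^ (e - 1)) with h | h
  · have : 0 ≤ (k0 + 1) * ((k0 / a) ^ (β / (1 - e)) + 1) * q ^ β := by positivity
    linarith
  · have key : q ^ (-β) ≤ (k0 / a) ^ (β / (1 - e)) + 1 := by
      rcases le_or_gt β 0 with hb | hb
      · have h1 : q ^ (-β) ≤ 1 := Real.rpow_le_one hq.le hq1 (by linarith)
        have h2 : 0 ≤ (k0 / a) ^ (β / (1 - e)) := by positivity
        linarith
      · have h1 : q ^ (e - 1) ≤ k0 / a := by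
          rw [le_div_iff₀ ha]; linarith
        have h2 := Real.rpow_le_rpow hqe.le h1 (div_nonneg hb.le (by linarith : 0 ≤ 1 - e))
        rw [← Real.rpow_mul hq.le] at h2
        have h3 : (e - 1) * (β / (1 - e)) = -β := by
          have : 1 - e ≠ 0 := by linarith
          field_simp
          ring
        rw [h3] at h2
        linarith
    have h1 : 1 ≤ ((k0 / a) ^ (β / (1 - e)) + 1) * q ^ β := by
      calc (1:ℝ) = q ^ (-β) * q ^ β := by rw [← Real.rpow_add hq]; simp
        _ ≤ _ := by gcongr
    nlinarith [mul_pos ha hqe]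

lemma choose_C {a k0 : ℝ} (hp : 1 < p) (ha : 0 < a) (hk : 0 ≤ k0) (he1 : e < 1) :
    ∃ C : ℝ, 1 ≤ C ∧ ∀ q : ℝ, 0 < q → q ≤ 1 → k0 < C ^ (p - 1) * q ^ β + a * q ^ (e - 1) := by
  obtain ⟨M, hM, h⟩ := choose_M (β := β) ha hk he1
  refine ⟨(M + 1) ^ (1 / (p - 1)), Real.one_le_rpow (by linarith) (by
    apply div_nonneg <;> linarith), fun q hq hq1 => ?_⟩
  rw [← Real.rpow_mul (by linarith), one_div_mul_cancel (by linarith), Real.rpow_one]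
  have := h q hq hq1
  have := Real.rpow_pos_of_pos hq β
  linarith

lemma clip_mem (hL : 0 ≤ L) (hC : 1 ≤ C) (he : 0 < e) {t : ℝ} (ht : t ∈ Ico (0:ℝ) 1) (y : ℝ) :
    clipf L C e t y ∈ Icc 0 (2 * C) := by
  unfold clipf
  have h1 := psub_pos (L := L) (e := e) t
  have h2 := psub_le_one (e := e) hL ht.2.le
  have h3 := psup_le (by linarith : 0 ≤ C) he ⟨ht.1, ht.2.le⟩
  refine ⟨le_max_of_le_left h1.le, max_le (by linarith) ((min_le_right _ _).trans h3)⟩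

lemma clip_lip (t y z : ℝ) : |clipf L C e t y - clipf L C e t z| ≤ |y - z| := by
  unfold clipf
  refine (abs_max_sub_max_le_max _ _ _ _).trans ?_
  simp only [sub_self, abs_zero]
  refine max_le (abs_nonneg _) ((abs_min_sub_min_le_max _ _ _ _).trans ?_)
  simp

lemma rpow_lip {M x y : ℝ} (hp : 1 < p) (hx : x ∈ Icc 0 M) (hy : y ∈ Icc 0 M) :
    |x ^ p - y ^ p| ≤ p * M ^ (p - 1) * |x - y| := by
  have := Convex.norm_image_sub_le_of_norm_hasDerivWithin_le (f := fun x : ℝ => x ^ p)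
    (f' := fun x => p * x ^ (p - 1)) (s := Icc 0 M) (C := p * M ^ (p - 1)) (x := y) (y := x)
    (fun x hx => (Real.hasDerivAt_rpow_const (Or.inr hp.le)).hasDerivWithinAt)
    (fun x hx => by
      rw [Real.norm_of_nonneg (mul_nonneg (by linarith) (Real.rpow_nonneg hx.1 _))]
      apply mul_le_mul_of_nonneg_left _ (by linarith)
      exact Real.rpow_le_rpow hx.1 hx.2 (by linarith)) (convex_Icc _ _) hy hx
  exact this

lemma Nfun_hyp (hL : 0 ≤ L) (hC : 1 ≤ C) (he : 0 < e) (hp : 1 < p) (hc : 0 < c) (hγ : 0 < γ)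
    (hβ : -1 < β) : ∃ δ η B, NHyp c γ δ η B (Nfun L C e β p K) := by
  have hδ1 : -1 < min β 0 := lt_min hβ (by norm_num)
  have hη : 0 < min γ ((1 + min β 0) / 2) := lt_min hγ (by linarith)
  have hM : 0 ≤ 2 * C := by linarith
  have hMp := Real.rpow_nonneg hM p
  have hMp1 := Real.rpow_nonneg hM (p - 1)
  refine ⟨min β 0, min γ ((1 + min β 0) / 2),
    (2 * C) ^ p + |K| * (2 * C) + (p * (2 * C) ^ (p - 1) + |K|),
    hc, hη, min_le_left _ _, by linarith [min_le_right γ ((1 + min β 0) / 2)], min_le_right _ _,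
    ?_, ?_, ?_⟩
  · intro f hf
    have hcl : Continuous (fun t => clipf L C e t (f t)) :=
      (psub_cont he).max (hf.min (psup_cont he))
    unfold Nfun
    apply ContinuousOn.sub
    · exact (one_sub_rpow_cont _).mul
        (hcl.rpow_const (fun x => Or.inr (by linarith))).continuousOn
    · exact (continuous_const.mul hcl).continuousOn
  · intro t ht y
    have hq : 0 < 1 - t := by linarith [ht.2]
    have hq1 : 1 - t ≤ 1 := by linarith [ht.1]
    have h1 : (1 - t) ^ β ≤ (1 - t) ^ (min β 0) :=
      Real.rpow_le_rpow_of_exponent_ge hq hq1 (min_le_left _ _)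
    have h2 : 1 ≤ (1 - t) ^ (min β 0) :=
      Real.one_le_rpow_of_pos_of_le_one_of_nonpos hq hq1 (min_le_right _ _)
    have hm := clip_mem (e := e) hL hC he ht y
    have h3 := Real.rpow_le_rpow hm.1 hm.2 (by linarith : 0 ≤ p)
    have h4 := Real.rpow_nonneg hm.1 p
    have h5 := Real.rpow_nonneg hq.le β
    unfold Nfun
    set X := (1 - t) ^ (min β 0)
    set k := clipf L C e t y
    calc |(1 - t) ^ β * k ^ p - K * k| ≤ |(1 - t) ^ β * k ^ p| + |K * k| := abs_sub _ _
      _ = (1 - t) ^ β * k ^ p + |K| * k := by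
        rw [abs_mul K, abs_of_nonneg hm.1, abs_of_nonneg (mul_nonneg h5 h4)]
      _ ≤ X * (2 * C) ^ p + (|K| * (2 * C)) * X := by
        apply add_le_add
        · exact mul_le_mul h1 h3 h4 (by positivity)
        · have : |K| * k ≤ |K| * (2 * C) := mul_le_mul_of_nonneg_left hm.2 (abs_nonneg _)
          have h6 : 0 ≤ |K| * (2 * C) := by positivity
          nlinarith
      _ ≤ _ := by
        have : 0 ≤ (p * (2 * C) ^ (p - 1) + |K|) * X := by positivity
        nlinarith
  · intro t ht y z
    have hq : 0 < 1 - t := by linarith [ht.2]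
    have hq1 : 1 - t ≤ 1 := by linarith [ht.1]
    have h1 : (1 - t) ^ β ≤ (1 - t) ^ (min β 0) :=
      Real.rpow_le_rpow_of_exponent_ge hq hq1 (min_le_left _ _)
    have h2 : 1 ≤ (1 - t) ^ (min β 0) :=
      Real.one_le_rpow_of_pos_of_le_one_of_nonpos hq hq1 (min_le_right _ _)
    have h5 := Real.rpow_nonneg hq.le β
    have h3 := rpow_lip hp (clip_mem (e := e) hL hC he ht y) (clip_mem (e := e) hL hC he ht z)
    have h4 := clip_lip (L := L) (C := C) (e := e) t y z
    unfold Nfun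
    set X := (1 - t) ^ (min β 0)
    set k := clipf L C e t y
    set l := clipf L C e t z
    have h7 : |k ^ p - l ^ p| ≤ p * (2 * C) ^ (p - 1) * |y - z| :=
      h3.trans (mul_le_mul_of_nonneg_left h4 (by positivity))
    calc |(1 - t) ^ β * k ^ p - K * k - ((1 - t) ^ β * l ^ p - K * l)|
        = |(1 - t) ^ β * (k ^ p - l ^ p) - K * (k - l)| := by congr 1; ring
      _ ≤ |(1 - t) ^ β * (k ^ p - l ^ p)| + |K * (k - l)| := abs_sub _ _
      _ = (1 - t) ^ β * |k ^ p - l ^ p| + |K| * |k - l| := by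
        rw [abs_mul, abs_mul, abs_of_nonneg h5]
      _ ≤ X * (p * (2 * C) ^ (p - 1) * |y - z|) + (|K| * |y - z|) * X := by
        apply add_le_add
        · exact mul_le_mul h1 h7 (abs_nonneg _) (by positivity)
        · have : |K| * |k - l| ≤ |K| * |y - z| := mul_le_mul_of_nonneg_left h4 (abs_nonneg _)
          have h6 : 0 ≤ |K| * |y - z| := by positivity
          nlinarith
      _ ≤ _ := by
        have : 0 ≤ ((2 * C) ^ p + |K| * (2 * C)) * X * |y - z| := by positivity
        nlinarith
end


lemma exists_f {c γ β p K : ℝ} (hc : 0 < c) (hγ : 0 < γ) (hβ : -1 < β) (hp : 1 < p) :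
    ∃ (f D : ℝ → ℝ) (m M : ℝ), 0 < m ∧ Continuous f ∧ (∀ t ∈ Icc (0:ℝ) 1, m ≤ f t ∧ f t ≤ M) ∧
      ContinuousOn D (Iio 1) ∧
      (∀ t ∈ Ico (0:ℝ) 1, f t = f 0 + ∫ s in (0:ℝ)..t, D s) ∧
      (∀ t ∈ Ioo (0:ℝ) 1, HasDerivAt f (D t) t) ∧
      (∀ t ∈ Ico (0:ℝ) 1, D t = 1 / 4 * ((1 - t) ^ (γ - 1) *
        Jint c (fun s => (1 - s) ^ (-γ) * ((1 - s) ^ β * f s ^ p - K * f s)) t)) ∧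
      (∀ t ∈ Ioo (0:ℝ) 1, HasDerivAt D
        ((((1 - t) ^ β * f t ^ p - K * f t) / 4 - (c - (c + 1 - γ) * t) * D t) / (t * (1 - t))) t) ∧
      4 * (c * D 0) = f 0 ^ p - K * f 0 := by
  -- parameters
  set e : ℝ := min (γ / 2) (min (1 / 2) (1 + β)) with hedef
  have he : 0 < e := lt_min (by linarith) (lt_min (by norm_num) (by linarith))
  have he2 : e ≤ 1 / 2 := (min_le_right _ _).trans (min_le_left _ _)
  have heβ : e - 1 ≤ β := by
    have : e ≤ 1 + β := (min_le_right _ _).trans (min_le_right _ _)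
    linarith
  have heγ : e ≤ γ / 2 := min_le_left _ _
  set b : ℝ := min (γ - e) c with hbdef
  have hb : 0 < b := lt_min (by linarith) hc
  have hb1 : b ≤ γ - e := min_le_left _ _
  have hb2 : b ≤ c := min_le_right _ _
  set L : ℝ := (2 + |K|) / (4 * e * b) with hLdef
  have hL : 0 < L := by positivity
  have hLb : 1 + |K| < 4 * L * e * b := by
    have : 4 * L * e * b = 2 + |K| := by
      rw [hLdef]; field_simp
    linarith
  obtain ⟨C, hC, hCb⟩ := choose_C (β := β) (e := e) (a := 4 * e * b) (k0 := 2 * |K|) hp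
    (by positivity) (by positivity) (by linarith)
  have hC0 : 0 < C := by linarith
  obtain ⟨δ, η, B, hN⟩ := Nfun_hyp (K := K) hL.le hC he hp hc hγ hβ
  obtain ⟨A, f, hf, hf1, hfA⟩ := hN.shoot 1
  set N := Nfun L C e β p K with hNdef
  have hDc := hN.Dcont hf
  have hf0 : f 0 = A := by simpa using hfA 0 ⟨le_rfl, zero_le_one⟩
  have hfd : ∀ t ∈ Ioo (0:ℝ) 1, HasDerivAt f (Dop c γ N f t) t := by
    intro t ht
    refine (prim_hasDeriv hDc A ht.2).congr_of_eventuallyEq ?_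
    filter_upwards [Ioo_mem_nhds ht.1 ht.2] with s hs using hfA s ⟨hs.1.le, hs.2.le⟩
  have hfd0 : HasDerivWithinAt f (Dop c γ N f 0) (Ici 0) 0 := by
    refine (prim_hasDeriv hDc A one_pos).hasDerivWithinAt.congr_of_eventuallyEq ?_
      (hfA 0 ⟨le_rfl, zero_le_one⟩)
    filter_upwards [Ico_mem_nhdsGE (one_pos : (0:ℝ) < 1)] with s hs using hfA s ⟨hs.1, hs.2.le⟩
  have hD2 := fun t ht => hN.Dderiv hf (t := t) ht
  have hD0 := hN.Dzero f
  -- upper bound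
  have hup : ∀ t ∈ Icc (0:ℝ) 1, f t - psup C e t ≤ 0 := by
    refine comparison (γ := γ) (h := fun t => f t - psup C e t)
      (h1 := fun t => Dop c γ N f t - (-(C * e) * (1 - t) ^ (e - 1)))
      (h2 := fun t => ((N t (f t) / 4 - (c - (c + 1 - γ) * t) * Dop c γ N f t) / (t * (1 - t))) -
        (C * e * ((e - 1) * (1 - t) ^ (e - 1 - 1)))) hc
      (hf.sub (psup_cont he)).continuousOn ?_ ?_ ?_ ?_ ?_ ?_
    · have := psup_ge (e := e) hC0.le (le_refl (1:ℝ))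
      rw [hf1]; linarith
    · intro t ht
      exact (hfd t ht).sub (psup_deriv ht.2)
    · exact hfd0.sub (psup_deriv one_pos).hasDerivWithinAt
    · intro t ht
      exact (hD2 t ht).sub (psup_deriv2 ht.2)
    · intro t ht hpos
      have hs := psup_strict (c := c) (K := K) he hp hC0 hb1 hb2 hCb (t := t) ⟨ht.1.le, ht.2⟩
      have hcl : clipf L C e t (f t) = psup C e t := by
        unfold clipf
        rw [min_eq_right (by linarith), max_eq_right]
        exact (psub_le_one hL.le ht.2.le).trans (hC.trans (psup_ge hC0.le ht.2.le))
      have hNe : N t (f t) = (1 - t) ^ β * psup C e t ^ p - K * psup C e t := by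
        rw [hNdef]; unfold Nfun; rw [hcl]
      rw [← hNe] at hs
      have ht1 : 0 < 1 - t := by linarith [ht.2]
      have ht0 := ht.1
      have e1 : t * (1 - t) * ((N t (f t) / 4 - (c - (c + 1 - γ) * t) * Dop c γ N f t) /
          (t * (1 - t))) = (N t (f t) / 4 - (c - (c + 1 - γ) * t) * Dop c γ N f t) := by
        field_simp
      rw [mul_sub (t * (1 - t)), e1]
      linarith
    · intro hpos
      have hs := psup_strict (c := c) (K := K) he hp hC0 hb1 hb2 hCb (t := 0) ⟨le_rfl, one_pos⟩
      have hcl : clipf L C e 0 (f 0) = psup C e 0 := by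
        unfold clipf
        rw [min_eq_right (by linarith), max_eq_right]
        exact (psub_le_one hL.le zero_le_one).trans (hC.trans (psup_ge hC0.le zero_le_one))
      have hNe : N 0 (f 0) = (1 - 0) ^ β * psup C e 0 ^ p - K * psup C e 0 := by
        rw [hNdef]; unfold Nfun; rw [hcl]
      rw [← hNe] at hs
      linarith
  have hlow : ∀ t ∈ Icc (0:ℝ) 1, psub L e t - f t ≤ 0 := by
    refine comparison (γ := γ) (h := fun t => psub L e t - f t)
      (h1 := fun t => L * e * (1 - t) ^ (e - 1) * psub L e t - Dop c γ N f t)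
      (h2 := fun t => (L * e * (-((e - 1) * (1 - t) ^ (e - 1 - 1)) * psub L e t +
        (1 - t) ^ (e - 1) * (L * e * (1 - t) ^ (e - 1) * psub L e t))) -
        ((N t (f t) / 4 - (c - (c + 1 - γ) * t) * Dop c γ N f t) / (t * (1 - t)))) hc
      ((psub_cont he).sub hf).continuousOn ?_ ?_ ?_ ?_ ?_ ?_
    · have := psub_le_one (e := e) hL.le (le_refl (1:ℝ))
      rw [hf1]; linarith
    · intro t ht
      exact (psub_deriv ht.2).sub (hfd t ht)
    · exact (psub_deriv one_pos).hasDerivWithinAt.sub hfd0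
    · intro t ht
      exact (psub_deriv2 ht.2).sub (hD2 t ht)
    · intro t ht hpos
      have hs := psub_strict (c := c) (K := K) he hp hL hb1 hb2 heβ (by linarith) hLb (t := t)
        ⟨ht.1.le, ht.2⟩
      have hcl : clipf L C e t (f t) = psub L e t := by
        unfold clipf
        rw [max_eq_left]
        exact (min_le_left _ _).trans (by linarith)
      have hNe : N t (f t) = (1 - t) ^ β * psub L e t ^ p - K * psub L e t := by
        rw [hNdef]; unfold Nfun; rw [hcl]
      rw [← hNe] at hs
      have ht1 : 0 < 1 - t := by linarith [ht.2]
      have ht0 := ht.1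
      have e1 : t * (1 - t) * ((N t (f t) / 4 - (c - (c + 1 - γ) * t) * Dop c γ N f t) /
          (t * (1 - t))) = (N t (f t) / 4 - (c - (c + 1 - γ) * t) * Dop c γ N f t) := by
        field_simp
      rw [mul_sub (t * (1 - t)), e1]
      linarith
    · intro hpos
      have hs := psub_strict (c := c) (K := K) he hp hL hb1 hb2 heβ (by linarith) hLb (t := 0)
        ⟨le_rfl, one_pos⟩
      have hcl : clipf L C e 0 (f 0) = psub L e 0 := by
        unfold clipf
        rw [max_eq_left]
        exact (min_le_left _ _).trans (by linarith)
      have hNe : N 0 (f 0) = (1 - 0) ^ β * psub L e 0 ^ p - K * psub L e 0 := by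
        rw [hNdef]; unfold Nfun; rw [hcl]
      rw [← hNe] at hs
      linarith
  have hNf : ∀ t ∈ Icc (0:ℝ) 1, N t (f t) = (1 - t) ^ β * f t ^ p - K * f t := by
    intro t ht
    have hcl : clipf L C e t (f t) = f t := by
      unfold clipf
      rw [min_eq_left (by linarith [hup t ht]), max_eq_right (by linarith [hlow t ht])]
    rw [hNdef]; unfold Nfun; rw [hcl]
  refine ⟨f, Dop c γ N f, Real.exp (-L), 2 * C, Real.exp_pos _, hf, ?_, hDc, ?_, hfd, ?_, ?_, ?_⟩
  · intro t ht
    have h1 := psub_ge hL.le he ht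
    have h2 := psup_le hC0.le he ht
    exact ⟨by linarith [hlow t ht], by linarith [hup t ht]⟩
  · intro t ht
    rw [hf0]
    exact hfA t ⟨ht.1, ht.2.le⟩
  · intro t ht
    unfold Dop Jint
    congr 2
    apply intervalIntegral.integral_congr
    intro l hl
    rw [uIcc_of_le zero_le_one] at hl
    simp only
    rw [hNf (l * t) ⟨mul_nonneg hl.1 ht.1, (mul_mem_Iio ht.2 hl).le⟩]
  · intro t ht
    rw [← hNf t ⟨ht.1.le, ht.2.le⟩]
    exact hD2 t ht
  · rw [hD0, hNf 0 ⟨le_rfl, zero_le_one⟩]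
    simp

/-- The ODE theorem. -/
theorem exists_g {c γ β p K : ℝ} (hc : 0 < c) (hγ : 0 < γ) (hβ : -1 < β) (hp : 1 < p) :
    ∃ (g g1 g2 : ℝ → ℝ) (m M : ℝ), 0 < m ∧ (∀ t ∈ Ico (0:ℝ) 1, m ≤ g t ∧ g t ≤ M) ∧
      (∀ t < 1, HasDerivAt g (g1 t) t) ∧ (∀ t < 1, HasDerivAt g1 (g2 t) t) ∧
      ContinuousOn g2 (Iio 1) ∧
      (∀ t ∈ Ico (0:ℝ) 1, 4 * (t * (1 - t) * g2 t + (c - (c + 1 - γ) * t) * g1 t) =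
        (1 - t) ^ β * g t ^ p - K * g t) := by
  obtain ⟨f, D, m, M, hm, hf, hfb, hDc, hfD, hfd, hDJ, hD2, hD0⟩ := exists_f (K := K) hc hγ hβ hp
  set H : ℝ → ℝ := fun s => (1 - s) ^ (-γ) * ((1 - s) ^ β * f s ^ p - K * f s) with hH
  set H1 : ℝ → ℝ := fun s =>
    -(-γ * (1 - s) ^ (-γ - 1)) * ((1 - s) ^ β * f s ^ p - K * f s) +
    (1 - s) ^ (-γ) * ((-(β * (1 - s) ^ (β - 1)) * f s ^ p +
      (1 - s) ^ β * (D s * p * f s ^ (p - 1))) - K * D s) with hH1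
  have hmax : ∀ t : ℝ, t < 1 → max t 0 ∈ Ico (0:ℝ) 1 := fun t ht =>
    ⟨le_max_right _ _, max_lt ht one_pos⟩
  have hfpos : ∀ t ∈ Ico (0:ℝ) 1, 0 < f t := fun t ht => hm.trans_le (hfb t ⟨ht.1, ht.2.le⟩).1
  have hHd : ∀ t ∈ Ioo (0:ℝ) 1, HasDerivAt H (H1 t) t := by
    intro t ht
    have h1 := one_sub_rpow_deriv (-γ) ht.2
    have h2 := one_sub_rpow_deriv β ht.2
    have h3 := (hfd t ht).rpow_const (p := p) (Or.inr hp.le)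
    exact h1.mul ((h2.mul h3).sub ((hfd t ht).const_mul K))
  have hfp : ∀ r : ℝ, ContinuousOn (fun t => f t ^ r) (Ico 0 1) := by
    intro r t ht
    exact (hf.continuousAt.rpow_const (Or.inl (hfpos t ht).ne')).continuousWithinAt
  have hsub : Ico (0:ℝ) 1 ⊆ Iio 1 := fun x hx => hx.2
  have hq : ∀ r : ℝ, ContinuousOn (fun t : ℝ => (1 - t) ^ r) (Ico 0 1) := fun r =>
    (one_sub_rpow_cont r).mono hsub
  have hDc' := hDc.mono hsub
  have hHc : ContinuousOn H (Ico 0 1) :=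
    (hq _).mul (((hq _).mul (hfp p)).sub (continuousOn_const.mul hf.continuousOn))
  have hH1c : ContinuousOn H1 (Ico 0 1) := by
    apply ContinuousOn.add
    · exact ((continuousOn_const.mul (hq _)).neg).mul
        (((hq _).mul (hfp p)).sub (continuousOn_const.mul hf.continuousOn))
    · apply (hq _).mul
      apply ContinuousOn.sub
      · exact ((continuousOn_const.mul (hq _)).neg.mul (hfp p)).add
          ((hq _).mul ((hDc'.mul continuousOn_const).mul (hfp _)))
      · exact continuousOn_const.mul hDc'
  set H1' : ℝ → ℝ := fun t => H1 (max t 0) with hH1'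
  have hH1c' : ContinuousOn H1' (Iio 1) :=
    hH1c.comp (by fun_prop) (fun t ht => hmax t ht)
  set Ht : ℝ → ℝ := fun t => H 0 + ∫ s in (0:ℝ)..t, H1' s with hHt
  have hHtd : ∀ t < 1, HasDerivAt Ht (H1' t) t := fun t ht => prim_hasDeriv hH1c' _ ht
  have hHte : ∀ t ∈ Ico (0:ℝ) 1, Ht t = H t := by
    intro t ht
    have hI : IntervalIntegrable H1' MeasureTheory.volume 0 t := by
      apply ContinuousOn.intervalIntegrable
      apply hH1c'.mono
      rw [uIcc_of_le ht.1]
      intro x hx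
      exact hx.2.trans_lt ht.2
    have := intervalIntegral.integral_eq_sub_of_hasDerivAt_of_le ht.1 (f := H) (f' := H1')
      (hHc.mono fun x hx => ⟨hx.1, hx.2.trans_lt ht.2⟩)
      (fun x hx => by
        rw [hH1']
        simp only
        rw [max_eq_left hx.1.le]
        exact hHd x ⟨hx.1, hx.2.trans ht.2⟩) hI
    rw [hHt]
    simp only
    rw [this]
    ring
  have hHtc : ContinuousOn Ht (Iio 1) := fun t ht => (hHtd t ht).continuousAt.continuousWithinAt
  set g1 : ℝ → ℝ := fun t => 1 / 4 * ((1 - t) ^ (γ - 1) * Jint c Ht t) with hg1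
  set g2 : ℝ → ℝ := fun t => 1 / 4 * (-((γ - 1) * (1 - t) ^ (γ - 1 - 1)) * Jint c Ht t +
    (1 - t) ^ (γ - 1) * Jint (c + 1) H1' t) with hg2
  have hg1d : ∀ t < 1, HasDerivAt g1 (g2 t) t := fun t ht =>
    ((one_sub_rpow_deriv (γ - 1) ht).mul (Jint_deriv hc hHtd hH1c' ht)).const_mul (1 / 4)
  have hg1c : ContinuousOn g1 (Iio 1) := fun t ht => (hg1d t ht).continuousAt.continuousWithinAt
  have hg2c : ContinuousOn g2 (Iio 1) := by
    apply continuousOn_const.mul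
    apply ContinuousOn.add
    · exact ((continuousOn_const.mul (one_sub_rpow_cont _)).neg).mul (Jint_cont hc hHtc)
    · exact (one_sub_rpow_cont _).mul (Jint_cont (by linarith) hH1c')
  have hg1D : ∀ t ∈ Ico (0:ℝ) 1, g1 t = D t := by
    intro t ht
    rw [hDJ t ht]
    simp only [hg1]
    unfold Jint
    congr 2
    apply intervalIntegral.integral_congr
    intro l hl
    rw [uIcc_of_le zero_le_one] at hl
    simp only
    rw [hHte (l * t) ⟨mul_nonneg hl.1 ht.1, mul_mem_Iio ht.2 hl⟩]
  set g : ℝ → ℝ := fun t => f 0 + ∫ s in (0:ℝ)..t, g1 s with hg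
  have hgf : ∀ t ∈ Ico (0:ℝ) 1, g t = f t := by
    intro t ht
    rw [hfD t ht]
    simp only [hg]
    congr 1
    apply intervalIntegral.integral_congr
    intro s hs
    rw [uIcc_of_le ht.1] at hs
    exact hg1D s ⟨hs.1, hs.2.trans_lt ht.2⟩
  refine ⟨g, g1, g2, m, M, hm, ?_, fun t ht => prim_hasDeriv hg1c _ ht, hg1d, hg2c, ?_⟩
  · intro t ht
    rw [hgf t ht]
    exact hfb t ⟨ht.1, ht.2.le⟩
  · intro t ht
    rw [hgf t ht, hg1D t ht]
    rcases eq_or_lt_of_le ht.1 with h0 | h0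
    · rw [← h0]
      simp only [zero_mul, mul_zero, sub_zero, zero_add, Real.one_rpow, one_mul]
      exact hD0
    · have htI : t ∈ Ioo (0:ℝ) 1 := ⟨h0, ht.2⟩
      have hev : g1 =ᶠ[nhds t] D := by
        filter_upwards [Ioo_mem_nhds htI.1 htI.2] with s hs using hg1D s ⟨hs.1.le, hs.2⟩
      have hu := (hg1d t ht.2).unique ((hD2 t htI).congr_of_eventuallyEq hev)
      rw [hu]
      have ht1 : 0 < 1 - t := by linarith [ht.2]
      field_simp
      ring


lemma second_line {E : Type*} [NormedAddCommGroup E] [NormedSpace ℝ E] {u : E → ℝ} {s : Set E}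
    (hs : IsOpen s) (hu : ContDiffOn ℝ 2 u s) {x : E} (hx : x ∈ s) (e : E) (φ1 : ℝ → ℝ) (φ2 : ℝ)
    (h1 : ∀ τ : ℝ, x + τ • e ∈ s → HasDerivAt (fun τ : ℝ => u (x + τ • e)) (φ1 τ) τ)
    (h2 : HasDerivAt φ1 φ2 0) : iteratedFDeriv ℝ 2 u x ![e, e] = φ2 := by
  rw [iteratedFDeriv_two_apply]
  simp only [Matrix.cons_val_zero, Matrix.cons_val_one]
  have hline : ∀ τ : ℝ, HasDerivAt (fun τ : ℝ => x + τ • e) e τ := by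
    intro τ
    simpa using ((hasDerivAt_id τ).smul_const e).const_add x
  have hcont : Continuous (fun τ : ℝ => x + τ • e) := by fun_prop
  have hev : ∀ᶠ τ : ℝ in nhds 0, x + τ • e ∈ s := by
    apply hcont.continuousAt.eventually_mem
    apply hs.mem_nhds
    simpa using hx
  have hφ1 : ∀ τ : ℝ, x + τ • e ∈ s → fderiv ℝ u (x + τ • e) e = φ1 τ := by
    intro τ hτ
    have hd : DifferentiableAt ℝ u (x + τ • e) :=
      (hu.differentiableOn (by norm_num)).differentiableAt (hs.mem_nhds hτ)
    exact (hd.hasFDerivAt.comp_hasDerivAt τ (hline τ)).unique (h1 τ hτ)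
  have hf : ContDiffOn ℝ 1 (fderiv ℝ u) s := hu.fderiv_of_isOpen hs (by norm_num)
  have hfd : DifferentiableAt ℝ (fderiv ℝ u) (x + (0:ℝ) • e) := by
    apply (hf.differentiableOn (by norm_num)).differentiableAt (hs.mem_nhds _)
    simpa using hx
  have h3 := hfd.hasFDerivAt.comp_hasDerivAt (0:ℝ) (hline 0)
  have h4 : HasDerivAt (fun τ : ℝ => fderiv ℝ u (x + τ • e) e)
      (fderiv ℝ (fderiv ℝ u) (x + (0:ℝ) • e) e e) 0 := by
    have := h3.clm_apply (hasDerivAt_const (0:ℝ) e)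
    simpa using this
  have h5 : HasDerivAt (fun τ : ℝ => fderiv ℝ u (x + τ • e) e) φ2 0 := by
    apply h2.congr_of_eventuallyEq
    filter_upwards [hev] with τ hτ using hφ1 τ hτ
  have := h4.unique h5
  simpa using this

lemma line_A {a δ τ : ℝ} : HasDerivAt (fun τ : ℝ => a + δ * τ) δ τ := by
  simpa using ((hasDerivAt_id τ).const_mul δ).const_add a

lemma line_B {b y τ : ℝ} :
    HasDerivAt (fun τ : ℝ => b + 2 * y * τ + τ ^ 2) (2 * y + 2 * τ) τ := by
  have := (((hasDerivAt_id τ).const_mul (2 * y)).const_add b).add ((hasDerivAt_id τ).pow 2)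
  refine this.congr_deriv ?_
  simp

lemma line_P {a b δ y τ α m : ℝ} (hA : 0 < a + δ * τ) (hB : 0 < b + 2 * y * τ + τ ^ 2) :
    HasDerivAt (fun τ : ℝ => (a + δ * τ) ^ α * (b + 2 * y * τ + τ ^ 2) ^ (-m))
      ((a + δ * τ) ^ α * (b + 2 * y * τ + τ ^ 2) ^ (-m) *
        (α * δ / (a + δ * τ) - m * (2 * y + 2 * τ) / (b + 2 * y * τ + τ ^ 2))) τ := by
  have h1 := (line_A (a := a) (δ := δ) (τ := τ)).rpow_const (p := α) (Or.inl hA.ne')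
  have h2 := (line_B (b := b) (y := y) (τ := τ)).rpow_const (p := -m) (Or.inl hB.ne')
  refine (h1.mul h2).congr_deriv ?_
  rw [rpow_sub_one hA.ne', rpow_sub_one hB.ne']
  field_simp
  ring

lemma line_T {a b δ y τ : ℝ} (hB : 0 < b + 2 * y * τ + τ ^ 2) :
    HasDerivAt (fun τ : ℝ => 1 - (a + δ * τ) ^ 2 / (b + 2 * y * τ + τ ^ 2))
      (-(2 * (a + δ * τ) * δ) / (b + 2 * y * τ + τ ^ 2) +
        (a + δ * τ) ^ 2 * (2 * y + 2 * τ) / (b + 2 * y * τ + τ ^ 2) ^ 2) τ := by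
  have h1 := (line_A (a := a) (δ := δ) (τ := τ)).pow 2
  have h2 := (line_B (b := b) (y := y) (τ := τ))
  refine ((h1.div h2 hB.ne').const_sub 1).congr_deriv ?_
  field_simp
  norm_num
  ring

lemma line_phi {a b δ y τ α m : ℝ} {g g1 : ℝ → ℝ} (hg : ∀ t < 1, HasDerivAt g (g1 t) t)
    (hA : 0 < a + δ * τ) (hB : 0 < b + 2 * y * τ + τ ^ 2) :
    HasDerivAt (fun τ : ℝ => (a + δ * τ) ^ α * (b + 2 * y * τ + τ ^ 2) ^ (-m) *
        g (1 - (a + δ * τ) ^ 2 / (b + 2 * y * τ + τ ^ 2)))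
      ((a + δ * τ) ^ α * (b + 2 * y * τ + τ ^ 2) ^ (-m) *
        ((α * δ / (a + δ * τ) - m * (2 * y + 2 * τ) / (b + 2 * y * τ + τ ^ 2)) *
          g (1 - (a + δ * τ) ^ 2 / (b + 2 * y * τ + τ ^ 2)) +
        (-(2 * (a + δ * τ) * δ) / (b + 2 * y * τ + τ ^ 2) +
        (a + δ * τ) ^ 2 * (2 * y + 2 * τ) / (b + 2 * y * τ + τ ^ 2) ^ 2) *
          g1 (1 - (a + δ * τ) ^ 2 / (b + 2 * y * τ + τ ^ 2)))) τ := by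
  have ht : 1 - (a + δ * τ) ^ 2 / (b + 2 * y * τ + τ ^ 2) < 1 := by
    have : 0 < (a + δ * τ) ^ 2 / (b + 2 * y * τ + τ ^ 2) := by positivity
    linarith
  have h1 := line_P (α := α) (m := m) hA hB
  have h2 := (hg _ ht).comp τ (line_T (a := a) (δ := δ) hB)
  refine (h1.mul h2).congr_deriv ?_
  simp only [Function.comp_apply]
  ring

/-- Second derivative along a coordinate line, written in the form `C1 δ + C3 y² + C4`. -/
lemma line_phi2 {a b δ y α m : ℝ} {g g1 g2 : ℝ → ℝ} (hg : ∀ t < 1, HasDerivAt g (g1 t) t)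
    (hg1 : ∀ t < 1, HasDerivAt g1 (g2 t) t) (ha : 0 < a) (hb : 0 < b)
    (hδ : δ = 0 ∨ (δ = 1 ∧ y = a)) :
    HasDerivAt (fun τ : ℝ => (a + δ * τ) ^ α * (b + 2 * y * τ + τ ^ 2) ^ (-m) *
        ((α * δ / (a + δ * τ) - m * (2 * y + 2 * τ) / (b + 2 * y * τ + τ ^ 2)) *
          g (1 - (a + δ * τ) ^ 2 / (b + 2 * y * τ + τ ^ 2)) +
        (-(2 * (a + δ * τ) * δ) / (b + 2 * y * τ + τ ^ 2) +
        (a + δ * τ) ^ 2 * (2 * y + 2 * τ) / (b + 2 * y * τ + τ ^ 2) ^ 2) *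
          g1 (1 - (a + δ * τ) ^ 2 / (b + 2 * y * τ + τ ^ 2))))
      (δ * (a ^ α * b ^ (-m) * ((α ^ 2 / a ^ 2 - 4 * α * m / b - α / a ^ 2) * g (1 - a ^ 2 / b) +
        (-4 * α / b + 4 * α * a ^ 2 / b ^ 2 + 8 * m * a ^ 2 / b ^ 2 - 2 / b + 8 * a ^ 2 / b ^ 2) *
          g1 (1 - a ^ 2 / b) +
        (4 * a ^ 2 / b ^ 2 - 8 * a ^ 4 / b ^ 3) * g2 (1 - a ^ 2 / b))) +
      y ^ 2 * (a ^ α * b ^ (-m) * ((4 * m ^ 2 / b ^ 2 + 4 * m / b ^ 2) * g (1 - a ^ 2 / b) +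
        (-8 * m * a ^ 2 / b ^ 3 - 8 * a ^ 2 / b ^ 3) * g1 (1 - a ^ 2 / b) +
        (4 * a ^ 4 / b ^ 4) * g2 (1 - a ^ 2 / b))) +
      (a ^ α * b ^ (-m) * ((-2 * m / b) * g (1 - a ^ 2 / b) +
        (2 * a ^ 2 / b ^ 2) * g1 (1 - a ^ 2 / b)))) 0 := by
  have hA : 0 < a + δ * 0 := by simpa using ha
  have hB : 0 < b + 2 * y * 0 + (0:ℝ) ^ 2 := by simpa using hb
  have ht : 1 - (a + δ * 0) ^ 2 / (b + 2 * y * 0 + 0 ^ 2) < 1 := by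
    have : 0 < (a + δ * 0) ^ 2 / (b + 2 * y * 0 + 0 ^ 2) := by positivity
    linarith
  have hP := line_P (α := α) (m := m) hA hB
  have hT := line_T (a := a) (δ := δ) hB
  have hgT := (hg _ ht).comp 0 hT
  have hg1T := (hg1 _ ht).comp 0 hT
  have hAd := (line_A (a := a) (δ := δ) (τ := 0))
  have hBd := (line_B (b := b) (y := y) (τ := 0))
  have hBd' : HasDerivAt (fun τ : ℝ => 2 * y + 2 * τ) 2 0 := line_A
  have hl := ((hasDerivAt_const (0:ℝ) (α * δ)).div hAd hA.ne').sub
    ((hBd'.const_mul m).div hBd hB.ne')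
  have hT1 := (((hAd.const_mul 2).mul_const δ).neg.div hBd hB.ne').add
    (((hAd.pow 2).mul hBd').div (hBd.pow 2) (pow_ne_zero 2 hB.ne'))
  refine (hP.mul ((hl.mul hgT).add (hT1.mul hg1T))).congr_deriv ?_
  simp only [Function.comp_apply, Pi.mul_apply, Pi.add_apply, Pi.sub_apply, Pi.div_apply,
    Pi.neg_apply, Pi.pow_apply, mul_zero, add_zero, ne_eq, OfNat.ofNat_ne_zero, not_false_eq_true,
    zero_pow]
  generalize g (1 - a ^ 2 / b) = G0
  generalize g1 (1 - a ^ 2 / b) = G1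
  generalize g2 (1 - a ^ 2 / b) = G2
  generalize a ^ α = X
  generalize b ^ (-m) = Y
  rcases hδ with rfl | ⟨rfl, rfl⟩
  · field_simp
    norm_num
    left
    ring
  · field_simp
    norm_num
    left
    ring


noncomputable def uSol (n : ℕ) (α m : ℝ) (g : ℝ → ℝ) (x : EuclideanSpace ℝ (Fin n)) : ℝ :=
  x1 x ^ α * (‖x‖ ^ 2) ^ (-m) * g (1 - x1 x ^ 2 / ‖x‖ ^ 2)

lemma x1_eq {n : ℕ} (hn : 0 < n) (x : EuclideanSpace ℝ (Fin n)) : x1 x = x ⟨0, hn⟩ := by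
  simp [x1, hn]

lemma contDiff_x1 {n : ℕ} (hn : 0 < n) :
    ContDiff ℝ 2 (fun x : EuclideanSpace ℝ (Fin n) => x1 x) := by
  have : (fun x : EuclideanSpace ℝ (Fin n) => x1 x) = fun x => x ⟨0, hn⟩ := by
    funext x
    exact x1_eq hn x
  rw [this]
  fun_prop

lemma isOpen_halfSpace {n : ℕ} (hn : 0 < n) : IsOpen (halfSpace n) :=
  isOpen_lt continuous_const (contDiff_x1 hn).continuous

lemma x1_sq_le {n : ℕ} (hn : 0 < n) (x : EuclideanSpace ℝ (Fin n)) : x1 x ^ 2 ≤ ‖x‖ ^ 2 := by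
  rw [x1_eq hn, EuclideanSpace.real_norm_sq_eq]
  exact Finset.single_le_sum (f := fun i => x i ^ 2) (fun i _ => sq_nonneg _) (Finset.mem_univ _)

lemma normsq_pos {n : ℕ} (hn : 0 < n) {x : EuclideanSpace ℝ (Fin n)} (hx : x ∈ halfSpace n) :
    0 < ‖x‖ ^ 2 := by
  have h : 0 < x1 x := hx
  have := x1_sq_le hn x
  have : 0 < x1 x ^ 2 := by positivity
  linarith

lemma tvar_mem {n : ℕ} (hn : 0 < n) {x : EuclideanSpace ℝ (Fin n)} (hx : x ∈ halfSpace n) :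
    1 - x1 x ^ 2 / ‖x‖ ^ 2 ∈ Ico (0:ℝ) 1 := by
  have h : 0 < x1 x := hx
  have hb := normsq_pos hn hx
  have h1 : x1 x ^ 2 / ‖x‖ ^ 2 ≤ 1 := (div_le_one hb).2 (x1_sq_le hn x)
  have h2 : 0 < x1 x ^ 2 / ‖x‖ ^ 2 := by positivity
  exact ⟨by linarith, by linarith⟩

lemma contDiffOn_g {g g1 g2 : ℝ → ℝ} (hg : ∀ t < 1, HasDerivAt g (g1 t) t)
    (hg1 : ∀ t < 1, HasDerivAt g1 (g2 t) t) (hg2 : ContinuousOn g2 (Iio 1)) :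
    ContDiffOn ℝ 2 g (Iio 1) := by
  have e1 : ContDiffOn ℝ 1 g1 (Iio 1) := by
    have := (contDiffOn_succ_iff_deriv_of_isOpen (𝕜 := ℝ) (n := 0) (f := g1) (s := Iio (1:ℝ))
      isOpen_Iio).2 ⟨fun t ht => (hg1 t ht).differentiableAt.differentiableWithinAt,
        by simp, by
          rw [contDiffOn_zero]
          exact hg2.congr fun t ht => (hg1 t ht).deriv⟩
    simpa using this
  have := (contDiffOn_succ_iff_deriv_of_isOpen (𝕜 := ℝ) (n := 1) (f := g) (s := Iio (1:ℝ))
      isOpen_Iio).2 ⟨fun t ht => (hg t ht).differentiableAt.differentiableWithinAt,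
        by simp, e1.congr fun t ht => (hg t ht).deriv⟩
  exact this

lemma contDiffOn_uSol {n : ℕ} (hn : 0 < n) (α m : ℝ) {g : ℝ → ℝ}
    (hg : ContDiffOn ℝ 2 g (Iio 1)) : ContDiffOn ℝ 2 (uSol n α m g) (halfSpace n) := by
  have h1 : ContDiffOn ℝ 2 (fun x : EuclideanSpace ℝ (Fin n) => x1 x) (halfSpace n) :=
    (contDiff_x1 hn).contDiffOn
  have h2 : ContDiffOn ℝ 2 (fun x : EuclideanSpace ℝ (Fin n) => ‖x‖ ^ 2) (halfSpace n) :=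
    (contDiff_norm_sq ℝ).contDiffOn
  unfold uSol
  refine ((h1.rpow_const_of_ne fun x hx => ?_).mul
    (h2.rpow_const_of_ne fun x hx => (normsq_pos hn hx).ne')).mul
    (hg.comp (contDiffOn_const.sub ((h1.pow 2).div h2 fun x hx => (normsq_pos hn hx).ne'))
      fun x hx => (tvar_mem hn hx).2)
  have h : 0 < x1 x := hx
  exact h.ne'

lemma x1_line {n : ℕ} (hn : 0 < n) (x : EuclideanSpace ℝ (Fin n)) (i : Fin n) (τ : ℝ) :
    x1 (x + τ • EuclideanSpace.single i (1:ℝ)) =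
      x1 x + (if i = ⟨0, hn⟩ then 1 else 0) * τ := by
  rw [x1_eq hn, x1_eq hn]
  by_cases h : i = ⟨0, hn⟩
  · simp [h]
  · simp [h, Ne.symm h]

lemma norm_line {n : ℕ} (x : EuclideanSpace ℝ (Fin n)) (i : Fin n) (τ : ℝ) :
    ‖x + τ • EuclideanSpace.single i (1:ℝ)‖ ^ 2 = ‖x‖ ^ 2 + 2 * x i * τ + τ ^ 2 := by
  rw [norm_add_sq_real, inner_smul_right, EuclideanSpace.inner_single_right, norm_smul]
  simp
  ring

lemma lap_uSol {n : ℕ} (hn : 0 < n) (α m : ℝ) {g g1 g2 : ℝ → ℝ}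
    (hg : ∀ t < 1, HasDerivAt g (g1 t) t)
    (hg1 : ∀ t < 1, HasDerivAt g1 (g2 t) t) (hg2 : ContinuousOn g2 (Iio 1))
    {x : EuclideanSpace ℝ (Fin n)} (hx : x ∈ halfSpace n) {a b : ℝ} (ha : a = x1 x)
    (hb : b = ‖x‖ ^ 2) :
    lap (uSol n α m g) x =
      (a ^ α * b ^ (-m) * ((α ^ 2 / a ^ 2 - 4 * α * m / b - α / a ^ 2) * g (1 - a ^ 2 / b) +
        (-4 * α / b + 4 * α * a ^ 2 / b ^ 2 + 8 * m * a ^ 2 / b ^ 2 - 2 / b + 8 * a ^ 2 / b ^ 2) *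
          g1 (1 - a ^ 2 / b) +
        (4 * a ^ 2 / b ^ 2 - 8 * a ^ 4 / b ^ 3) * g2 (1 - a ^ 2 / b))) +
      b * (a ^ α * b ^ (-m) * ((4 * m ^ 2 / b ^ 2 + 4 * m / b ^ 2) * g (1 - a ^ 2 / b) +
        (-8 * m * a ^ 2 / b ^ 3 - 8 * a ^ 2 / b ^ 3) * g1 (1 - a ^ 2 / b) +
        (4 * a ^ 4 / b ^ 4) * g2 (1 - a ^ 2 / b))) +
      n * (a ^ α * b ^ (-m) * ((-2 * m / b) * g (1 - a ^ 2 / b) +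
        (2 * a ^ 2 / b ^ 2) * g1 (1 - a ^ 2 / b))) := by
  have ha0 : 0 < a := ha ▸ hx
  have hb0 : 0 < b := hb ▸ normsq_pos hn hx
  have hterm : ∀ i : Fin n, iteratedFDeriv ℝ 2 (uSol n α m g) x
      ![EuclideanSpace.single i 1, EuclideanSpace.single i 1] = _ := fun i =>
    second_line (isOpen_halfSpace hn) (contDiffOn_uSol hn α m (contDiffOn_g hg hg1 hg2)) hx
      (EuclideanSpace.single i 1) _ _ (by
        intro τ hτ
        have hA : 0 < a + (if i = ⟨0, hn⟩ then 1 else 0) * τ := by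
          have h : 0 < x1 _ := hτ
          rw [x1_line hn] at h
          rwa [ha]
        have hB : 0 < b + 2 * x i * τ + τ ^ 2 := by
          have h := normsq_pos hn hτ
          rw [norm_line] at h
          rwa [hb]
        have := line_phi (α := α) (m := m) hg hA hB
        refine this.congr_of_eventuallyEq (Filter.Eventually.of_forall fun σ => ?_)
        simp only [uSol]
        rw [x1_line hn, norm_line, ha, hb])
      (line_phi2 hg hg1 ha0 hb0 (by
        by_cases h : i = ⟨0, hn⟩
        · right
          refine ⟨by simp [h], ?_⟩
          rw [ha, x1_eq hn, h]
        · left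
          simp [h]))
  unfold lap
  rw [Finset.sum_congr rfl fun i _ => hterm i]
  rw [Finset.sum_add_distrib, Finset.sum_add_distrib, ← Finset.sum_mul, ← Finset.sum_mul,
    ← EuclideanSpace.real_norm_sq_eq, ← hb]
  simp only [Finset.sum_const, Finset.card_univ, Fintype.card_fin, nsmul_eq_mul,
    Finset.sum_ite_eq', Finset.mem_univ, if_true, one_mul]

lemma rpow_identity {a b G α p k m : ℝ} (ha : 0 < a) (hb : 0 < b) (hG : 0 < G) (hp : 1 < p)
    (hk : k = 2 / (p - 1)) (hm : m = (α + k) / 2) :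
    (a ^ α * b ^ (-m) * G) ^ p =
      a ^ α * b ^ (-m) * b⁻¹ * ((a ^ 2 / b) ^ (α * (p - 1) / 2) * G ^ p) := by
  have hp1 : p - 1 ≠ 0 := by linarith
  have hkp : k * (p - 1) = 2 := by
    rw [hk]
    field_simp
  rw [mul_rpow (by positivity) hG.le, mul_rpow (by positivity) (by positivity), ← rpow_mul ha.le,
    ← rpow_mul hb.le, div_rpow (by positivity) hb.le, ← rpow_natCast a 2, ← rpow_mul ha.le,
    ← rpow_neg_one b, div_eq_mul_inv, ← rpow_neg hb.le]
  have e1 : a ^ (α * p) = a ^ α * a ^ (((2:ℕ):ℝ) * (α * (p - 1) / 2)) := by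
    rw [← rpow_add ha]
    congr 1
    push_cast
    ring
  have e2 : b ^ (-m * p) = b ^ (-m) * b ^ (-1:ℝ) * b ^ (-(α * (p - 1) / 2)) := by
    rw [← rpow_add hb, ← rpow_add hb]
    congr 1
    rw [hm]
    linear_combination (-1/2) * hkp
  rw [e1, e2]
  ring

/-- for `1 < p < p_KO` (where `p_KO = ∞` if `0 ≤ μ < 1/4` and
`p_KO = 1 − 2/α₋` if `μ < 0`) there exists a positive classical solution of
`Δu + (μ/x₁²)u = u^p` on the half-space with
`c⁻¹ x₁^{α₋} |x|^{−α₋−2/(p−1)} ≤ u ≤ c x₁^{α₋} |x|^{−α₋−2/(p−1)}`. -/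
theorem stmt3 (n : ℕ) (hn : 2 ≤ n) (μ p : ℝ) (hμ : μ < 1 / 4) (hp1 : 1 < p)
    (hKO : μ < 0 → p < 1 - 2 / aMinus μ) :
    ∃ c > (0 : ℝ), ∃ u : EuclideanSpace ℝ (Fin n) → ℝ,
      ContDiffOn ℝ 2 u (halfSpace n) ∧
      (∀ x ∈ halfSpace n, 0 < u x) ∧
      (∀ x ∈ halfSpace n, lap u x + (μ / (x1 x) ^ 2) * u x = u x ^ p) ∧
      (∀ x ∈ halfSpace n,
        c⁻¹ * x1 x ^ aMinus μ * ‖x‖ ^ (-(aMinus μ) - 2 / (p - 1)) ≤ u x ∧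
        u x ≤ c * x1 x ^ aMinus μ * ‖x‖ ^ (-(aMinus μ) - 2 / (p - 1))) := by
  have hn0 : 0 < n := by omega
  have hn2 : (2:ℝ) ≤ n := by exact_mod_cast hn
  have hsq : Real.sqrt (1 / 4 - μ) ^ 2 = 1 / 4 - μ := Real.sq_sqrt (by linarith)
  have hsp : 0 < Real.sqrt (1 / 4 - μ) := Real.sqrt_pos.2 (by linarith)
  obtain ⟨α, hα⟩ : ∃ α, α = aMinus μ := ⟨_, rfl⟩
  rw [← hα] at hKO ⊢
  have hα1 : α = 1 / 2 - Real.sqrt (1 / 4 - μ) := hα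
  have hroot : α ^ 2 - α + μ = 0 := by
    rw [hα1]
    linear_combination hsq
  have hγ : 0 < 1 / 2 - α := by
    rw [hα1]
    linarith
  have hβ : -1 < α * (p - 1) / 2 := by
    rcases lt_or_ge μ 0 with h | h
    · have hneg : α < 0 := by
        by_contra hc
        push Not at hc
        nlinarith
      have h2 := hKO h
      have h3 : p - 1 < 2 / (-α) := by
        rw [div_neg]
        linarith
      rw [lt_div_iff₀ (by linarith)] at h3
      linarith
    · have hpos : 0 ≤ α := by
        by_contra hc
        push Not at hc
        nlinarith
      have : 0 ≤ α * (p - 1) / 2 := by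
        have : 0 ≤ p - 1 := by linarith
        positivity
      linarith
  obtain ⟨k, hk⟩ : ∃ k, k = 2 / (p - 1) := ⟨_, rfl⟩
  rw [← hk]
  obtain ⟨m, hm⟩ : ∃ m, m = (α + k) / 2 := ⟨_, rfl⟩
  obtain ⟨g, g1, g2, L, M, hL, hgb, hg, hg1, hg2, hode⟩ :=
    exists_g (c := ((n:ℝ) - 1) / 2) (γ := 1 / 2 - α) (β := α * (p - 1) / 2) (p := p)
      (K := (k + α) * (k - α + 2 - n)) (by linarith) hγ hβ hp1
  have hLM : L ≤ M := (hgb 0 (by simp)).1.trans (hgb 0 (by simp)).2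
  have hM : 0 < M := lt_of_lt_of_le hL hLM
  have hC : 0 < max M L⁻¹ := lt_max_of_lt_left hM
  refine ⟨max M L⁻¹, hC, uSol n α m g, contDiffOn_uSol hn0 α m (contDiffOn_g hg hg1 hg2),
    ?_, ?_, ?_⟩
  · intro x hx
    have h : 0 < x1 x := hx
    have hb := normsq_pos hn0 hx
    have h3 := hL.trans_le (hgb _ (tvar_mem hn0 hx)).1
    unfold uSol
    positivity
  · intro x hx
    have ha : 0 < x1 x := hx
    have hb := normsq_pos hn0 hx
    have ht := tvar_mem hn0 hx
    have hG := hL.trans_le (hgb _ ht).1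
    have ho := hode _ ht
    rw [lap_uSol hn0 α m hg hg1 hg2 hx rfl rfl]
    unfold uSol
    rw [rpow_identity ha hb hG hp1 hk hm]
    have hs : 1 - (1 - x1 x ^ 2 / ‖x‖ ^ 2) = x1 x ^ 2 / ‖x‖ ^ 2 := by ring
    rw [hs] at ho
    have hμ' : μ = α - α ^ 2 := by linarith
    have ho2 : (x1 x ^ 2 / ‖x‖ ^ 2) ^ (α * (p - 1) / 2) * g (1 - x1 x ^ 2 / ‖x‖ ^ 2) ^ p =
        4 * ((1 - x1 x ^ 2 / ‖x‖ ^ 2) * (x1 x ^ 2 / ‖x‖ ^ 2) * g2 (1 - x1 x ^ 2 / ‖x‖ ^ 2) +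
        (((n:ℝ) - 1) / 2 - (((n:ℝ) - 1) / 2 + 1 - (1 / 2 - α)) * (1 - x1 x ^ 2 / ‖x‖ ^ 2)) *
          g1 (1 - x1 x ^ 2 / ‖x‖ ^ 2)) + (k + α) * (k - α + 2 - n) * g (1 - x1 x ^ 2 / ‖x‖ ^ 2) := by
      linarith
    rw [ho2, hμ', hm]
    clear ho ho2 ht hs hode hgb
    generalize g (1 - x1 x ^ 2 / ‖x‖ ^ 2) = G0
    generalize g1 (1 - x1 x ^ 2 / ‖x‖ ^ 2) = G1
    generalize g2 (1 - x1 x ^ 2 / ‖x‖ ^ 2) = G2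
    generalize x1 x ^ α = X
    generalize (‖x‖ ^ 2) ^ (-((α + k) / 2)) = Y
    generalize ‖x‖ ^ 2 = b at *
    generalize x1 x = a at *
    field_simp
    ring
  · intro x hx
    have ha : 0 < x1 x := hx
    have hb := normsq_pos hn0 hx
    have hGb := hgb _ (tvar_mem hn0 hx)
    have e : ‖x‖ ^ (-α - k) = (‖x‖ ^ 2) ^ (-m) := by
      rw [← rpow_natCast, ← rpow_mul (norm_nonneg x), hm]
      congr 1
      push_cast
      ring
    have hP : 0 < x1 x ^ α * (‖x‖ ^ 2) ^ (-m) := by positivity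
    rw [e, mul_assoc, mul_assoc]
    unfold uSol
    have h1 : (max M L⁻¹)⁻¹ ≤ L := by
      rw [inv_le_comm₀ hC hL]
      exact le_max_right _ _
    constructor
    · rw [mul_comm]
      exact mul_le_mul_of_nonneg_left (h1.trans hGb.1) hP.le
    · rw [mul_comm (max M L⁻¹)]
      exact mul_le_mul_of_nonneg_left (hGb.2.trans (le_max_left _ _)) hP.le
end

section
/- Let n ≥ 2, μ < 0 and p > p_KO := 1 − 2/α₋ (note α₋ < 0, so p_KO > 1). Then there is no positive classical solution u of Δu + (μ/x₁²)u = u^p on ℝⁿ₊ satisfying, for some c > 0, c⁻¹ x₁^{α₋} |x|^{−α₋−2/(p−1)} ≤ u(x) ≤ c x₁^{α₋} |x|^{−α₋−2/(p−1)} for all x ∈ ℝⁿ₊. -/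
open Real Set

open Filter Topology in
lemma second_deriv_nonpos_of_isLocalMax (F : ℝ → ℝ) (hc : ContinuousAt F 0)
    (h : IsLocalMax F 0) : deriv (deriv F) 0 ≤ 0 := by
  by_contra hpos
  push Not at hpos
  have hmin := isLocalMin_of_deriv_deriv_pos hpos h.deriv_eq_zero hc
  have heq : F =ᶠ[𝓝 0] fun _ => F 0 := by
    filter_upwards [h, hmin] with t h1 h2 using le_antisymm h1 h2
  have h2 : deriv F =ᶠ[𝓝 0] deriv (fun _ => F 0) := heq.deriv
  rw [h2.deriv_eq] at hpos
  simp at hpos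

open Filter Topology in
lemma second_dir_le {n : ℕ} (u : EuclideanSpace ℝ (Fin n) → ℝ)
    (x y e : EuclideanSpace ℝ (Fin n)) (A : ℝ) (hu : ContDiffAt ℝ 2 u y) (he : ‖e‖ = 1)
    (h : IsLocalMax (fun z => u z - A * ‖z - x‖ ^ 2) y) :
    iteratedFDeriv ℝ 2 u y ![e, e] ≤ 2 * A := by
  set L : ℝ → EuclideanSpace ℝ (Fin n) := fun t => y + t • e with hL
  have hL0 : L 0 = y := by simp [hL]
  have hLd : ∀ t, HasDerivAt L e t := by
    intro t
    have h1 := ((hasDerivAt_id t).smul_const e).const_add y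
    rw [one_smul] at h1
    exact h1
  have hLc : ContinuousAt L 0 := (hLd 0).continuousAt
  set b : ℝ := inner ℝ (y - x) e with hb
  have hnorm : ∀ t, ‖L t - x‖ ^ 2 = ‖y - x‖ ^ 2 + 2 * t * b + t ^ 2 := by
    intro t
    have : L t - x = (y - x) + t • e := by simp [hL]; abel
    rw [this, norm_add_sq_real, inner_smul_right, norm_smul, he]
    simp [hb]
    ring
  set F : ℝ → ℝ := fun t => u (L t) - A * (‖y - x‖ ^ 2 + 2 * t * b + t ^ 2) with hF
  have hFmax : IsLocalMax F 0 := by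
    have hLt : Tendsto L (𝓝 0) (𝓝 y) := by
      have := hLc.tendsto
      rwa [hL0] at this
    have := hLt.eventually h
    filter_upwards [this] with t ht
    simp only [hnorm] at ht
    have h0 := hnorm 0
    rw [hL0] at h0
    simp only [hF, hL0]
    linarith
  have hquad : ∀ t, HasDerivAt (fun t : ℝ => A * (‖y - x‖ ^ 2 + 2 * t * b + t ^ 2))
      (A * (2 * b + 2 * t)) t := by
    intro t
    have h1 := ((((hasDerivAt_id t).const_mul 2).mul_const b).const_add (‖y - x‖ ^ 2))
    have h2 := (h1.add (hasDerivAt_pow 2 t)).const_mul A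
    have h3 : A * (2 * 1 * b + ((2 : ℕ) : ℝ) * t ^ (2 - 1)) = A * (2 * b + 2 * t) := by
      norm_num
    rw [← h3]
    exact h2
  have hev : ∀ᶠ z in 𝓝 y, DifferentiableAt ℝ u z := by
    filter_upwards [hu.eventually (by simp)] with z hz using hz.differentiableAt (by simp)
  have hdF : deriv F =ᶠ[𝓝 0] fun t => fderiv ℝ u (L t) e - A * (2 * b + 2 * t) := by
    have hLt : Tendsto L (𝓝 0) (𝓝 y) := by
      have := hLc.tendsto
      rwa [hL0] at this
    filter_upwards [hLt.eventually hev] with t ht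
    exact ((ht.hasFDerivAt.comp_hasDerivAt t (hLd t)).sub (hquad t)).deriv
  have hfd : DifferentiableAt ℝ (fderiv ℝ u) (L 0) := by
    rw [hL0]
    exact (hu.fderiv_right (m := 1) (by norm_num)).differentiableAt (by simp)
  have hd2 : HasDerivAt (fun t => fderiv ℝ u (L t) e - A * (2 * b + 2 * t))
      (fderiv ℝ (fderiv ℝ u) y e e - 2 * A) 0 := by
    have h1 := hfd.hasFDerivAt.comp_hasDerivAt (0 : ℝ) (hLd 0)
    have h2 := h1.clm_apply (hasDerivAt_const (0 : ℝ) e)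
    have h3 := (((hasDerivAt_id (0 : ℝ)).const_mul 2).const_add (2 * b)).const_mul A
    have h4 := h2.sub h3
    refine HasDerivAt.congr_deriv (f' := _) h4 ?_
    simp [hL0]
    ring
  have hFc : ContinuousAt F 0 := by
    have hu0 : ContinuousAt u (L 0) := by rw [hL0]; exact hu.continuousAt
    exact (ContinuousAt.comp (f := L) (g := u) hu0 hLc).sub (hquad 0).continuousAt
  have := second_deriv_nonpos_of_isLocalMax F hFc hFmax
  rw [hdF.deriv_eq, hd2.deriv] at this
  rw [iteratedFDeriv_two_apply]
  simp
  linarith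

lemma lap_le {n : ℕ} (u : EuclideanSpace ℝ (Fin n) → ℝ)
    (x y : EuclideanSpace ℝ (Fin n)) (A : ℝ) (hu : ContDiffAt ℝ 2 u y)
    (h : IsLocalMax (fun z => u z - A * ‖z - x‖ ^ 2) y) :
    lap u y ≤ n * (2 * A) := by
  unfold lap
  calc _ ≤ ∑ i : Fin n, 2 * A :=
        Finset.sum_le_sum fun i _ => second_dir_le u x y _ A hu (by simp) h
    _ = _ := by simp

/-- weak maximum principle on a ball -/
lemma ball_bound {n : ℕ} (hn : 0 < n) (u : EuclideanSpace ℝ (Fin n) → ℝ)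
    (x : EuclideanSpace ℝ (Fin n)) (r A U : ℝ) (hr : 0 < r) (hA : 0 < A)
    (hu : ∀ y ∈ Metric.closedBall x r, ContDiffAt ℝ 2 u y)
    (hpos : 0 < u x)
    (hlap : ∀ y ∈ Metric.closedBall x r, 4 * n * A ≤ lap u y)
    (hU : ∀ y ∈ Metric.closedBall x r, u y ≤ U) : A * r ^ 2 ≤ U := by
  have hcont : ContinuousOn (fun z => u z - A * ‖z - x‖ ^ 2) (Metric.closedBall x r) := by
    intro y hy
    apply ContinuousWithinAt.sub
    · exact (hu y hy).continuousAt.continuousWithinAt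
    · fun_prop
  have hx : x ∈ Metric.closedBall x r := Metric.mem_closedBall_self hr.le
  obtain ⟨y, hy, hmax⟩ := (isCompact_closedBall x r).exists_isMaxOn ⟨x, hx⟩ hcont
  have hyr : ‖y - x‖ = r := by
    have hle : ‖y - x‖ ≤ r := by rwa [← mem_closedBall_iff_norm]
    by_contra hne
    have hlt : ‖y - x‖ < r := lt_of_le_of_ne hle hne
    have hmem : Metric.closedBall x r ∈ nhds y :=
      Metric.closedBall_mem_nhds_of_mem (mem_ball_iff_norm.2 hlt)
    have h1 := lap_le u x y A (hu y hy) (hmax.isLocalMax hmem)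
    have h2 := hlap y hy
    have hn' : (0 : ℝ) < n := by exact_mod_cast hn
    nlinarith [mul_pos hn' hA]
  have h1 := hmax hx
  simp only [Set.mem_setOf_eq, sub_self, norm_zero, hyr] at h1
  have h2 := hU y hy
  norm_num at h1
  linarith

lemma norm_coord_le {n : ℕ} (z : EuclideanSpace ℝ (Fin n)) (i : Fin n) : |z i| ≤ ‖z‖ := by
  simpa using PiLp.norm_apply_le z i

/-- for `μ < 0` and `p > p_KO = 1 − 2/α₋` there is no positive
classical solution of `Δu + (μ/x₁²)u = u^p` on the half-space satisfying
`c⁻¹ x₁^{α₋} |x|^{−α₋−2/(p−1)} ≤ u ≤ c x₁^{α₋} |x|^{−α₋−2/(p−1)}`. -/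
theorem stmt4 (n : ℕ) (hn : 2 ≤ n) (μ p : ℝ) (hμ : μ < 0)
    (hKO : 1 - 2 / aMinus μ < p) :
    ¬ ∃ (u : EuclideanSpace ℝ (Fin n) → ℝ) (c : ℝ), 0 < c ∧
      ContDiffOn ℝ 2 u (halfSpace n) ∧
      (∀ x ∈ halfSpace n, 0 < u x) ∧
      (∀ x ∈ halfSpace n, lap u x + (μ / (x1 x) ^ 2) * u x = u x ^ p) ∧
      (∀ x ∈ halfSpace n,
        c⁻¹ * x1 x ^ aMinus μ * ‖x‖ ^ (-(aMinus μ) - 2 / (p - 1)) ≤ u x ∧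
        u x ≤ c * x1 x ^ aMinus μ * ‖x‖ ^ (-(aMinus μ) - 2 / (p - 1))) := by
  rintro ⟨u, c, hc, hu, hpos, heq, hbd⟩
  have hn0 : 0 < n := by omega
  have ha : aMinus μ < 0 := by
    unfold aMinus
    have : (1 / 2 : ℝ) < √(1 / 4 - μ) := by
      apply Real.lt_sqrt_of_sq_lt
      norm_num
      linarith
    linarith
  obtain ⟨a, hadef⟩ : ∃ a, a = -aMinus μ := ⟨_, rfl⟩
  have haM : aMinus μ = -a := by rw [hadef]; ring
  rw [haM] at ha hKO hbd
  have ha0 : 0 < a := by linarith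
  have hp1 : 2 / a < p - 1 := by
    have : 2 / (-a) = -(2 / a) := by rw [div_neg]
    rw [this] at hKO
    linarith
  have hp0 : 0 < p - 1 := lt_trans (by positivity) hp1
  have hd : 0 < a * (p - 1) - 2 := by
    rw [div_lt_iff₀ ha0] at hp1
    linarith
  have hs : 0 < - -a - 2 / (p - 1) := by
    rw [neg_neg, sub_pos, div_lt_iff₀ hp0]
    linarith
  generalize - -a - 2 / (p - 1) = s at hs hbd
  set d := a * (p - 1) - 2 with hddef
  set C1 : ℝ := c⁻¹ * (3 / 2) ^ (-a) * (1 / 2) ^ s with hC1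
  set C2 : ℝ := c * (1 / 2) ^ (-a) * 3 ^ s with hC2
  have hC1p : 0 < C1 := by positivity
  have hC2p : 0 < C2 := by positivity
  have hnR : (0 : ℝ) < n := by exact_mod_cast hn0
  set K : ℝ := 16 * n * C2 / C1 ^ p with hK
  have hKp : 0 < K := by positivity
  set ε : ℝ := (K + 1) ^ (-(1 / d)) with hε
  have hε0 : 0 < ε := by positivity
  have hε1 : ε ≤ 1 := by
    apply Real.rpow_le_one_of_one_le_of_nonpos (by linarith)
    have : 0 < 1 / d := by positivity
    linarith
  have hεd : ε ^ (-d) = K + 1 := by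
    rw [hε, ← Real.rpow_mul (by positivity)]
    have : -(1 / d) * -d = 1 := by field_simp
    rw [this, Real.rpow_one]
  set i0 : Fin n := ⟨0, hn0⟩ with hi0
  set i1 : Fin n := ⟨1, by omega⟩ with hi1
  have hi : i0 ≠ i1 := by simp [hi0, hi1]
  have hx1 : ∀ z : EuclideanSpace ℝ (Fin n), x1 z = z i0 := by
    intro z
    simp [x1, hn0, hi0]
  set x : EuclideanSpace ℝ (Fin n) :=
    EuclideanSpace.single i0 ε + EuclideanSpace.single i1 1 with hx
  have hx0 : x i0 = ε := by simp [hx, hi]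
  have hxi1 : x i1 = 1 := by simp [hx, hi.symm]
  have hxn : ‖x‖ ≤ 2 := by
    calc ‖x‖ ≤ _ := norm_add_le _ _
      _ ≤ 2 := by
        simp only [EuclideanSpace.norm_single, Real.norm_eq_abs, abs_of_pos hε0, abs_one]
        linarith
  have hopen : IsOpen (halfSpace n) := by
    have : halfSpace n = {z | 0 < z i0} := by
      ext z
      simp [halfSpace, hx1]
    rw [this]
    exact isOpen_lt continuous_const (by fun_prop)
  have hball : ∀ y ∈ Metric.closedBall x (ε / 2),
      (ε / 2 ≤ x1 y ∧ x1 y ≤ 3 / 2 * ε) ∧ 1 / 2 ≤ ‖y‖ ∧ ‖y‖ ≤ 3 := by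
    intro y hy
    rw [mem_closedBall_iff_norm] at hy
    have h0 := abs_le.1 ((norm_coord_le (y - x) i0).trans hy)
    have h1 := abs_le.1 ((norm_coord_le (y - x) i1).trans hy)
    simp only [PiLp.sub_apply, hx0, hxi1] at h0 h1
    rw [hx1]
    have h2 : y i1 ≤ ‖y‖ := (le_abs_self _).trans (norm_coord_le y i1)
    have h3 : ‖y‖ ≤ ‖y - x‖ + ‖x‖ := by simpa using norm_add_le (y - x) x
    refine ⟨⟨?_, ?_⟩, ?_, ?_⟩ <;> linarith [h0.1, h0.2, h1.1, h1.2]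
  have hmem : ∀ y ∈ Metric.closedBall x (ε / 2), y ∈ halfSpace n := by
    intro y hy
    have := (hball y hy).1.1
    show 0 < x1 y
    linarith
  have hlow : ∀ y ∈ Metric.closedBall x (ε / 2), C1 * ε ^ (-a) ≤ u y := by
    intro y hy
    obtain ⟨⟨h1, h2⟩, h3, h4⟩ := hball y hy
    have hy1 : 0 < x1 y := hmem y hy
    refine le_trans ?_ (hbd y (hmem y hy)).1
    have e1 : (3 / 2) ^ (-a) * ε ^ (-a) ≤ x1 y ^ (-a) := by
      rw [← Real.mul_rpow (by norm_num) hε0.le]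
      exact Real.rpow_le_rpow_of_nonpos hy1 h2 ha.le
    have e2 : (1 / 2 : ℝ) ^ s ≤ ‖y‖ ^ s := Real.rpow_le_rpow (by norm_num) h3 hs.le
    calc C1 * ε ^ (-a) = c⁻¹ * ((3 / 2) ^ (-a) * ε ^ (-a)) * (1 / 2) ^ s := by rw [hC1]; ring
      _ ≤ _ := by gcongr
  have hup : ∀ y ∈ Metric.closedBall x (ε / 2), u y ≤ C2 * ε ^ (-a) := by
    intro y hy
    obtain ⟨⟨h1, h2⟩, h3, h4⟩ := hball y hy
    have hy1 : 0 < x1 y := hmem y hy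
    refine le_trans (hbd y (hmem y hy)).2 ?_
    have e1 : x1 y ^ (-a) ≤ (1 / 2) ^ (-a) * ε ^ (-a) := by
      rw [← Real.mul_rpow (by norm_num) hε0.le]
      exact Real.rpow_le_rpow_of_nonpos (by positivity) (by linarith) ha.le
    have e2 : ‖y‖ ^ s ≤ (3 : ℝ) ^ s := Real.rpow_le_rpow (norm_nonneg _) h4 hs.le
    calc _ ≤ c * ((1 / 2) ^ (-a) * ε ^ (-a)) * 3 ^ s := by gcongr
      _ = _ := by rw [hC2]; ring
  have hxm : x ∈ Metric.closedBall x (ε / 2) := Metric.mem_closedBall_self (by positivity)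
  have key := ball_bound hn0 u x (ε / 2) ((C1 * ε ^ (-a)) ^ p / (4 * n)) (C2 * ε ^ (-a))
    (by positivity) (by positivity)
    (fun y hy => hu.contDiffAt (hopen.mem_nhds (hmem y hy)))
    (hpos x (hmem x hxm))
    (by
      intro y hy
      have h1 := heq y (hmem y hy)
      have h2 : (C1 * ε ^ (-a)) ^ p ≤ u y ^ p :=
        Real.rpow_le_rpow (by positivity) (hlow y hy) (by linarith)
      have h3 : μ / (x1 y) ^ 2 * u y ≤ 0 :=
        mul_nonpos_of_nonpos_of_nonneg (div_nonpos_of_nonpos_of_nonneg hμ.le (sq_nonneg _))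
          (hpos y (hmem y hy)).le
      have h4 : 4 * n * ((C1 * ε ^ (-a)) ^ p / (4 * n)) = (C1 * ε ^ (-a)) ^ p := by field_simp
      rw [h4]
      linarith)
    hup
  have hid : (C1 * ε ^ (-a)) ^ p / (4 * n) * (ε / 2) ^ 2
      = C1 ^ p * ε ^ (-d) / (16 * n) * ε ^ (-a) := by
    have h1 : ε ^ (-a * p) * ε ^ (2 : ℝ) = ε ^ (-d) * ε ^ (-a) := by
      rw [← Real.rpow_add hε0, ← Real.rpow_add hε0, hddef]
      congr 1
      ring
    rw [Real.rpow_two] at h1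
    rw [Real.mul_rpow hC1p.le (by positivity), ← Real.rpow_mul hε0.le]
    calc _ = C1 ^ p / (16 * n) * (ε ^ (-a * p) * ε ^ 2) := by ring
      _ = _ := by rw [h1]; ring
  rw [hid] at key
  have key2 := le_of_mul_le_mul_right key (by positivity)
  rw [hεd, div_le_iff₀ (by positivity)] at key2
  have hC : C1 ^ p * K = C2 * (16 * n) := by
    rw [hK]
    field_simp
  have : 0 < C1 ^ p := by positivity
  nlinarith
end
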